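/- Let A be a finitely generated commutative unital ℝ-algebra, let f₁,…,f_k ∈ A, let T be the preordering of A generated by f₁,…,f_k, and let h₁,…,h_m ∈ A be such that each h_j is bounded on K(T), i.e. there is a constant C with |χ(h_j)| ≤ C for all χ ∈ K(T) and j = 1,…,m. Then T satisfies (MP) if and only if for every λ ∈ h(K(T)) the preordering T_λ satisfies (MP). -/

import Mathlib

open MeasureTheory

/-- The preordering of a commutative ring generated by a set `S`:
the smallest subset containing all squares and `S`, closed under addition
and multiplication. -/
inductive IsInPreordering {A : Type*} [CommRing A] (S : Set A) : A → Prop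
  | sq (a : A) : IsInPreordering S (a ^ 2)
  | gen {a : A} : a ∈ S → IsInPreordering S a
  | add {a b : A} : IsInPreordering S a → IsInPreordering S b → IsInPreordering S (a + b)
  | mul {a b : A} : IsInPreordering S a → IsInPreordering S b → IsInPreordering S (a * b)

/-- The positivity set `K(T)` of the preordering generated by `S`, inside the
character space `A →ₐ[ℝ] ℝ`. -/
def KSet {A : Type*} [CommRing A] [Algebra ℝ A] (S : Set A) : Set (A →ₐ[ℝ] ℝ) :=
  {χ | ∀ a : A, IsInPreordering S a → 0 ≤ χ a}

/-- The character space carries the topology of pointwise convergence. -/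
noncomputable instance charTop (A : Type*) [CommRing A] [Algebra ℝ A] :
    TopologicalSpace (A →ₐ[ℝ] ℝ) :=
  TopologicalSpace.induced (fun χ (a : A) => χ a) Pi.topologicalSpace

/-- The Borel σ-algebra on the character space. -/
noncomputable instance charMeas (A : Type*) [CommRing A] [Algebra ℝ A] :
    MeasurableSpace (A →ₐ[ℝ] ℝ) := borel _

/-- `L` is a moment functional: it is given by integration against a positive
Borel measure on the character space. -/
def IsMomentFunctional {A : Type*} [CommRing A] [Algebra ℝ A] (L : A →ₗ[ℝ] ℝ) : Prop :=
  ∃ μ : Measure (A →ₐ[ℝ] ℝ),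
    ∀ a : A, Integrable (fun χ : A →ₐ[ℝ] ℝ => χ a) μ ∧ L a = ∫ χ : A →ₐ[ℝ] ℝ, χ a ∂μ

/-- The preordering generated by `S` has the moment property (MP): every linear
functional nonnegative on it is a moment functional. -/
def HasMP {A : Type*} [CommRing A] [Algebra ℝ A] (S : Set A) : Prop :=
  ∀ L : A →ₗ[ℝ] ℝ, (∀ a : A, IsInPreordering S a → 0 ≤ L a) → IsMomentFunctional L

/-- The generators of the fibre preordering `T_λ`. -/
def fibreGens {A : Type*} [CommRing A] [Algebra ℝ A] {k m : ℕ}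
    (f : Fin k → A) (h : Fin m → A) (lam : Fin m → ℝ) : Set A :=
  Set.range f ∪ ⋃ j : Fin m,
    {h j - algebraMap ℝ A (lam j), algebraMap ℝ A (lam j) - h j}



section Part1

structure PreO {A : Type*} [CommRing A] (T : Set A) : Prop where
  add : ∀ {a b : A}, a ∈ T → b ∈ T → a + b ∈ T
  mul : ∀ {a b : A}, a ∈ T → b ∈ T → a * b ∈ T
  sq : ∀ a : A, a ^ 2 ∈ T
  neg_one : (-1 : A) ∉ T

theorem PreO.zero {A : Type*} [CommRing A] {T : Set A} (h : PreO T) : (0 : A) ∈ T := by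
  simpa using h.sq 0

theorem PreO.one {A : Type*} [CommRing A] {T : Set A} (h : PreO T) : (1 : A) ∈ T := by
  simpa using h.sq 1

theorem PreO.adjoin {A : Type*} [CommRing A] {P : Set A} (hP : PreO P)
    (hmax : ∀ Q : Set A, PreO Q → P ⊆ Q → Q ⊆ P) {x : A} (hx : x ∉ P) :
    ∃ a ∈ P, ∃ b ∈ P, (-1 : A) = a + x * b := by
  by_contra hcon
  have hQ : PreO {y : A | ∃ a ∈ P, ∃ b ∈ P, y = a + x * b} := by
    refine ⟨?_, ?_, ?_, hcon⟩
    · rintro _ _ ⟨a, ha, b, hb, rfl⟩ ⟨c, hc, d, hd, rfl⟩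
      exact ⟨a + c, hP.add ha hc, b + d, hP.add hb hd, by ring⟩
    · rintro _ _ ⟨a, ha, b, hb, rfl⟩ ⟨c, hc, d, hd, rfl⟩
      exact ⟨a * c + x ^ 2 * (b * d), hP.add (hP.mul ha hc) (hP.mul (hP.sq x) (hP.mul hb hd)),
        a * d + b * c, hP.add (hP.mul ha hd) (hP.mul hb hc), by ring⟩
    · intro a
      exact ⟨a ^ 2, hP.sq a, 0, hP.zero, by ring⟩
  exact hx (hmax _ hQ (fun a ha => ⟨a, ha, 0, hP.zero, by ring⟩) ⟨0, hP.zero, 1, hP.one, by ring⟩)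

theorem PreO.exists_prime {A : Type*} [CommRing A] {T : Set A} (hT : PreO T) :
    ∃ P : Set A, T ⊆ P ∧ PreO P ∧ (∀ x, x ∈ P ∨ -x ∈ P) ∧
      ∀ a b : A, a * b ∈ P → -(a * b) ∈ P → (a ∈ P ∧ -a ∈ P) ∨ (b ∈ P ∧ -b ∈ P) := by
  obtain ⟨P, hTP, hP⟩ := zorn_subset_nonempty {Q : Set A | PreO Q} (by
    intro c hc hchain hne
    refine ⟨⋃₀ c, ?_, fun s hs => Set.subset_sUnion_of_mem hs⟩
    obtain ⟨Q0, hQ0⟩ := hne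
    have key : ∀ a b : A, a ∈ ⋃₀ c → b ∈ ⋃₀ c → ∃ Q ∈ c, a ∈ Q ∧ b ∈ Q := by
      rintro a b ⟨Q1, h1, ha⟩ ⟨Q2, h2, hb⟩
      rcases hchain.total h1 h2 with h | h
      · exact ⟨Q2, h2, h ha, hb⟩
      · exact ⟨Q1, h1, ha, h hb⟩
    refine ⟨?_, ?_, ?_, ?_⟩
    · intro a b ha hb
      obtain ⟨Q, hQ, h1, h2⟩ := key a b ha hb
      exact ⟨Q, hQ, (hc hQ).add h1 h2⟩
    · intro a b ha hb
      obtain ⟨Q, hQ, h1, h2⟩ := key a b ha hb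
      exact ⟨Q, hQ, (hc hQ).mul h1 h2⟩
    · intro a
      exact ⟨Q0, hQ0, (hc hQ0).sq a⟩
    · rintro ⟨Q, hQ, h⟩
      exact (hc hQ).neg_one h) T hT
  have hmax : ∀ Q : Set A, PreO Q → P ⊆ Q → Q ⊆ P := fun Q hQ h => hP.2 hQ h
  have hPP : PreO P := hP.1
  have htot : ∀ x, x ∈ P ∨ -x ∈ P := by
    intro x
    by_contra hcon
    push Not at hcon
    obtain ⟨a, ha, b, hb, h1⟩ := hPP.adjoin hmax hcon.1
    obtain ⟨c, hc, d, hd, h2⟩ := hPP.adjoin hmax hcon.2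
    apply hPP.neg_one
    have : (-1 : A) = a + c + a * c + x ^ 2 * (b * d) := by
      linear_combination (1 + c) * h1 - x * b * h2
    rw [this]
    exact hPP.add (hPP.add (hPP.add ha hc) (hPP.mul ha hc)) (hPP.mul (hPP.sq x) (hPP.mul hb hd))
  refine ⟨P, hTP, hPP, htot, ?_⟩
  have supp : ∀ y z : A, y ∈ P → -y ∈ P → -(y * z) ∈ P := by
    intro y z h1 h2
    rcases htot z with h | h
    · simpa using hPP.mul h2 h
    · simpa using hPP.mul h1 h
  have key : ∀ a b : A, a * b ∈ P → -(a * b) ∈ P → a ∉ P → b ∉ P → False := by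
    intro a b h1 h2 ha hb
    obtain ⟨s, hs, t, ht, e1⟩ := hPP.adjoin hmax ha
    obtain ⟨u, hu, v, hv, e2⟩ := hPP.adjoin hmax hb
    apply hPP.neg_one
    have : (-1 : A) = s + u + s * u + -((a * b) * (t * v)) := by
      linear_combination (1 + u) * e1 - a * t * e2
    rw [this]
    exact hPP.add (hPP.add (hPP.add hs hu) (hPP.mul hs hu)) (supp _ _ h1 h2)
  intro a b h1 h2
  by_contra hcon
  push Not at hcon
  obtain ⟨ha, hb⟩ := hcon
  by_cases ha' : a ∈ P
  · by_cases hb' : b ∈ P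
    · exact key (-a) (-b) (by simpa using h1) (by simpa using h2) (ha ha') (hb hb')
    · exact key (-a) b (by simpa using h2) (by simpa using h1) (ha ha') hb'
  · by_cases hb' : b ∈ P
    · exact key a (-b) (by simpa using h2) (by simpa using h1) ha' (hb hb')
    · exact key a b h1 h2 ha' hb'

end Part1

section Part2
universe u

open Polynomial

/-- A (possibly partial) cone in a field whose union with its negative is a subfield. -/
structure SCone {E : Type*} [Field E] (C : Set E) : Prop where
  add : ∀ {a b : E}, a ∈ C → b ∈ C → a + b ∈ C
  mul : ∀ {a b : E}, a ∈ C → b ∈ C → a * b ∈ C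
  one : (1 : E) ∈ C
  sub : ∀ {a b : E}, a ∈ C → b ∈ C → a - b ∈ C ∨ b - a ∈ C
  inv : ∀ {a : E}, a ∈ C → a⁻¹ ∈ C
  neg_one : (-1 : E) ∉ C

theorem SCone.zero {E : Type*} [Field E] {C : Set E} (h : SCone C) : (0 : E) ∈ C := by
  rcases h.sub h.one h.one with h | h <;> simpa using h

theorem SCone.antisymm {E : Type*} [Field E] {C : Set E} (h : SCone C) {x : E} (h1 : x ∈ C)
    (h2 : -x ∈ C) : x = 0 := by
  by_contra hx
  apply h.neg_one
  have := h.mul h2 (h.inv h1)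
  rwa [neg_mul, mul_inv_cancel₀ hx] at this

theorem exists_linearOrder {E : Type*} [Field E] (C : Set E)
    (add : ∀ {a b : E}, a ∈ C → b ∈ C → a + b ∈ C)
    (mul : ∀ {a b : E}, a ∈ C → b ∈ C → a * b ∈ C)
    (total : ∀ a : E, a ∈ C ∨ -a ∈ C)
    (anti : ∀ a : E, a ∈ C → -a ∈ C → a = 0) :
    ∃ (_ : LinearOrder E) (_ : IsStrictOrderedRing E), ∀ x : E, 0 ≤ x ↔ x ∈ C := by
  classical
  have h0 : (0 : E) ∈ C := by
    rcases total 0 with h | h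
    · exact h
    · simpa using h
  let lo : LinearOrder E :=
    { le := fun x y => y - x ∈ C
      le_refl := fun x => by simpa using h0
      le_trans := fun x y z h1 h2 => by
        have := add h1 h2
        simpa using this
      le_antisymm := fun x y h1 h2 => by
        have := anti (x - y) h2 (by simpa using h1)
        exact sub_eq_zero.mp this
      le_total := fun x y => by
        have := total (y - x)
        simpa using this
      toDecidableLE := Classical.decRel _ }
  have le_iff : ∀ x y : E, x ≤ y ↔ y - x ∈ C := fun x y => Iff.rfl
  have iom : IsOrderedAddMonoid E := ⟨fun a b hab c => by
    rw [le_iff] at hab ⊢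
    simpa using hab, fun a b hab c => by
    rw [le_iff] at hab ⊢
    simpa using hab⟩
  have h1 : (1 : E) ∈ C := by
    rcases total 1 with h | h
    · exact h
    · have := mul h h
      simpa using this
  have : ZeroLEOneClass E := ⟨by rw [le_iff]; simpa using h1⟩
  refine ⟨lo, IsStrictOrderedRing.of_mul_pos ?_, ?_⟩
  · intro a b ha hb
    refine lt_of_le_of_ne ?_ (mul_ne_zero ha.ne' hb.ne').symm
    have h1 := ha.le
    have h2 := hb.le
    rw [le_iff] at *
    simpa using mul (by simpa using h1) (by simpa using h2)
  · intro x
    rw [le_iff]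
    simp

/-- Intermediate value property for polynomials over an ordered field. -/
def IVP (R : Type*) [Field R] [LinearOrder R] : Prop :=
  ∀ (p : R[X]) (a b : R), a < b → p.eval a * p.eval b < 0 → ∃ c, a < c ∧ c < b ∧ p.eval c = 0

section order
variable {E : Type*} [Field E] [LinearOrder E] [IsStrictOrderedRing E]

theorem exists_irreducible_sign_change (a b : E) (q : E[X]) (h : q.eval a * q.eval b < 0) :
    ∃ p : E[X], Irreducible p ∧ p ∣ q ∧ p.eval a * p.eval b < 0 := by
  induction q using WfDvdMonoid.induction_on_irreducible with
  | zero => simp at h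
  | unit u hu =>
    obtain ⟨c, hc, rfl⟩ := Polynomial.isUnit_iff.mp hu
    simp at h
    exact absurd h (not_lt.mpr (mul_self_nonneg c))
  | mul q' p hq' hp ih =>
    by_cases hps : p.eval a * p.eval b < 0
    · exact ⟨p, hp, dvd_mul_right _ _, hps⟩
    · simp only [eval_mul] at h
      have : q'.eval a * q'.eval b < 0 := by
        by_contra hcon
        push Not at hcon hps
        have := mul_nonneg hps hcon
        linarith [mul_mul_mul_comm (p.eval a) (p.eval b) (q'.eval a) (q'.eval b)]
      obtain ⟨p', h1, h2, h3⟩ := ih this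
      exact ⟨p', h1, h2.mul_left _, h3⟩

/-- weighted sums of squares in `E[X]`. -/
inductive WSOS : E[X] → Prop
  | zero : WSOS 0
  | add {s : E[X]} (c : E) (hc : 0 ≤ c) (g : E[X]) : WSOS s → WSOS (C c * g ^ 2 + s)

theorem WSOS.eval_nonneg {s : E[X]} (hs : WSOS s) (a : E) : 0 ≤ s.eval a := by
  induction hs with
  | zero => simp
  | add c hc g _ ih =>
    simp only [eval_add, eval_mul, eval_C, eval_pow]
    positivity

theorem WSOS.add' {s t : E[X]} (hs : WSOS s) (ht : WSOS t) : WSOS (s + t) := by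
  induction hs with
  | zero => simpa using ht
  | add c hc g _ ih =>
    rw [add_assoc]
    exact WSOS.add c hc g ih

theorem WSOS.smul {s : E[X]} (hs : WSOS s) (c : E) (hc : 0 ≤ c) (g : E[X]) :
    WSOS (C c * g ^ 2 * s) := by
  induction hs with
  | zero => simpa using WSOS.zero
  | @add s d hd g' _ ih =>
    have : C c * g ^ 2 * (C d * g' ^ 2 + s) = C (c * d) * (g * g') ^ 2 + C c * g ^ 2 * s := by
      rw [C_mul]; ring
    rw [this]
    exact WSOS.add _ (mul_nonneg hc hd) _ ih

theorem WSOS.mul' {s t : E[X]} (hs : WSOS s) (ht : WSOS t) : WSOS (s * t) := by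
  induction hs with
  | zero => simpa using WSOS.zero
  | add c hc g _ ih =>
    rw [add_mul]
    exact (ht.smul c hc g).add' ih

theorem WSOS.sq (g : E[X]) : WSOS (g ^ 2) := by
  simpa using WSOS.add 1 zero_le_one g WSOS.zero

theorem WSOS.const (c : E) (hc : 0 ≤ c) : WSOS (C c) := by
  simpa using WSOS.add c hc 1 WSOS.zero

theorem WSOS.reduce {s : E[X]} (hs : WSOS s) (p : E[X]) (hp : 0 < p.natDegree) :
    ∃ s', WSOS s' ∧ s'.natDegree ≤ 2 * (p.natDegree - 1) ∧ p ∣ s - s' := by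
  induction hs with
  | zero => exact ⟨0, WSOS.zero, by simp, by simp⟩
  | @add s c hc g _ ih =>
    obtain ⟨s', h1, h2, h3⟩ := ih
    refine ⟨C c * (g % p) ^ 2 + s', WSOS.add c hc _ h1, ?_, ?_⟩
    · have hd : (g % p).natDegree < p.natDegree := Polynomial.natDegree_mod_lt g hp.ne'
      refine (natDegree_add_le _ _).trans (max_le ?_ h2)
      refine (natDegree_C_mul_le _ _).trans ?_
      refine (natDegree_pow_le).trans ?_
      omega
    · have : C c * g ^ 2 + s - (C c * (g % p) ^ 2 + s') =
        (g - g % p) * (C c * (g + g % p)) + (s - s') := by ring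
      rw [this]
      refine dvd_add (Dvd.dvd.mul_right ?_ _) h3
      exact ⟨g / p, by linear_combination -EuclideanDomain.div_add_mod g p⟩

theorem not_dvd_one_add_wsos (a b : E) : ∀ (n : ℕ) (p : E[X]), p.natDegree ≤ n → Irreducible p →
    p.eval a * p.eval b < 0 → ∀ s, WSOS s → ¬ p ∣ 1 + s := by
  intro n
  induction n with
  | zero =>
    intro p hp hirr
    have := hirr.natDegree_pos
    omega
  | succ n ih =>
    intro p hpn hirr hsign s hs hdvd
    have hpos := hirr.natDegree_pos
    obtain ⟨s', h1, h2, h3⟩ := hs.reduce p hpos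
    have hdvd' : p ∣ 1 + s' := by
      have := dvd_sub hdvd h3
      convert this using 1
      ring
    obtain ⟨q, hq⟩ := hdvd'
    have ea := congrArg (eval a) hq
    have eb := congrArg (eval b) hq
    simp only [eval_add, eval_one, eval_mul] at ea eb
    have pa := h1.eval_nonneg a
    have pb := h1.eval_nonneg b
    have hq0 : q ≠ 0 := by
      rintro rfl
      simp at ea
      linarith
    have hdeg : q.natDegree < p.natDegree := by
      have e1 : (p * q).natDegree = p.natDegree + q.natDegree := natDegree_mul hirr.ne_zero hq0
      have e2 : (1 + s').natDegree ≤ 2 * (p.natDegree - 1) :=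
        (natDegree_add_le _ _).trans (max_le (by simp) h2)
      rw [hq, e1] at e2
      omega
    have hqs : q.eval a * q.eval b < 0 := by
      by_contra hcon
      push Not at hcon
      have h5 : 0 < (p.eval a * q.eval a) * (p.eval b * q.eval b) := by
        rw [← ea, ← eb]
        positivity
      have h6 := mul_nonneg (neg_nonneg.mpr hsign.le) hcon
      nlinarith
    obtain ⟨p2, i1, i2, i3⟩ := exists_irreducible_sign_change a b q hqs
    refine ih p2 ?_ i1 i3 s' h1 ?_
    · have := natDegree_le_of_dvd i2 hq0
      omega
    · rw [hq]
      exact i2.mul_left _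

end order

theorem SCone.exists_max {Ω : Type*} [Field Ω] {C0 : Set Ω} (h0 : SCone C0) :
    ∃ C : Set Ω, C0 ⊆ C ∧ SCone C ∧ ∀ D : Set Ω, SCone D → C ⊆ D → D ⊆ C := by
  obtain ⟨P, hTP, hP⟩ := zorn_subset_nonempty {Q : Set Ω | SCone Q} (by
    intro c hc hchain hne
    refine ⟨⋃₀ c, ?_, fun s hs => Set.subset_sUnion_of_mem hs⟩
    obtain ⟨Q0, hQ0⟩ := hne
    have key : ∀ a b : Ω, a ∈ ⋃₀ c → b ∈ ⋃₀ c → ∃ Q ∈ c, a ∈ Q ∧ b ∈ Q := by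
      rintro a b ⟨Q1, h1, ha⟩ ⟨Q2, h2, hb⟩
      rcases hchain.total h1 h2 with h | h
      · exact ⟨Q2, h2, h ha, hb⟩
      · exact ⟨Q1, h1, ha, h hb⟩
    refine ⟨?_, ?_, ?_, ?_, ?_, ?_⟩
    · intro a b ha hb
      obtain ⟨Q, hQ, h1, h2⟩ := key a b ha hb
      exact ⟨Q, hQ, (hc hQ).add h1 h2⟩
    · intro a b ha hb
      obtain ⟨Q, hQ, h1, h2⟩ := key a b ha hb
      exact ⟨Q, hQ, (hc hQ).mul h1 h2⟩
    · exact ⟨Q0, hQ0, (hc hQ0).one⟩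
    · intro a b ha hb
      obtain ⟨Q, hQ, h1, h2⟩ := key a b ha hb
      exact ((hc hQ).sub h1 h2).imp (fun h => ⟨Q, hQ, h⟩) (fun h => ⟨Q, hQ, h⟩)
    · rintro a ⟨Q, hQ, h⟩
      exact ⟨Q, hQ, (hc hQ).inv h⟩
    · rintro ⟨Q, hQ, h⟩
      exact (hc hQ).neg_one h) C0 h0
  exact ⟨P, hTP, hP.1, fun D hD h => hP.2 hD h⟩

/-- The subfield spanned by a cone. -/
def SCone.subfield {Ω : Type*} [Field Ω] {C : Set Ω} (h : SCone C) : Subfield Ω where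
  carrier := {x | x ∈ C ∨ -x ∈ C}
  zero_mem' := Or.inl h.zero
  one_mem' := Or.inl h.one
  add_mem' := by
    rintro a b (ha | ha) (hb | hb)
    · exact Or.inl (h.add ha hb)
    · rcases h.sub ha hb with h | h
      · exact Or.inl (by simpa using h)
      · exact Or.inr (by convert h using 1; ring)
    · rcases h.sub ha hb with h | h
      · exact Or.inr (by convert h using 1; ring)
      · exact Or.inl (by convert h using 1; ring)
    · exact Or.inr (by convert h.add ha hb using 1; ring)
  mul_mem' := by
    rintro a b (ha | ha) (hb | hb)
    · exact Or.inl (h.mul ha hb)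
    · exact Or.inr (by simpa using h.mul ha hb)
    · exact Or.inr (by simpa using h.mul ha hb)
    · exact Or.inl (by simpa using h.mul ha hb)
  neg_mem' := by
    rintro a (ha | ha)
    · exact Or.inr (by simpa using ha)
    · exact Or.inl ha
  inv_mem' := by
    rintro a (ha | ha)
    · exact Or.inl (h.inv ha)
    · exact Or.inr (by simpa [inv_neg] using h.inv ha)

theorem SCone.exists_realClosed {Ω : Type*} [Field Ω] [IsAlgClosed Ω] {C0 : Set Ω}
    (h0 : SCone C0) :
    ∃ (R : Subfield Ω) (_ : LinearOrder R) (_ : IsStrictOrderedRing R), IVP R ∧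
      ∀ x ∈ C0, ∃ h : x ∈ R, (0 : R) ≤ ⟨x, h⟩ := by
  obtain ⟨C, hC0, hC, hmax⟩ := h0.exists_max
  let R := hC.subfield
  obtain ⟨lo, so, hnn⟩ := exists_linearOrder (E := R) {x : R | (x : Ω) ∈ C}
    (fun ha hb => hC.add ha hb) (fun ha hb => hC.mul ha hb) (fun a => a.2)
    (fun a h1 h2 => Subtype.ext (hC.antisymm h1 h2))
  refine ⟨R, lo, so, ?_, fun x hx => ⟨Or.inl (hC0 hx), (hnn _).mpr (hC0 hx)⟩⟩
  intro q a b hab hq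
  obtain ⟨p, hirr, hpq, hp⟩ := exists_irreducible_sign_change a b q hq
  haveI : Fact (Irreducible p) := ⟨hirr⟩
  -- preordering on AdjoinRoot p
  have hpre : PreO {y : AdjoinRoot p | ∃ s, WSOS s ∧ y = AdjoinRoot.mk p s} := by
    refine ⟨?_, ?_, ?_, ?_⟩
    · rintro _ _ ⟨s, hs, rfl⟩ ⟨t, ht, rfl⟩
      exact ⟨s + t, hs.add' ht, by simp⟩
    · rintro _ _ ⟨s, hs, rfl⟩ ⟨t, ht, rfl⟩
      exact ⟨s * t, hs.mul' ht, by simp⟩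
    · intro y
      obtain ⟨g, rfl⟩ := AdjoinRoot.mk_surjective y
      exact ⟨g ^ 2, WSOS.sq g, by simp⟩
    · rintro ⟨s, hs, h⟩
      refine not_dvd_one_add_wsos a b _ p le_rfl hirr hp s hs ?_
      rw [← AdjoinRoot.mk_eq_zero, map_add, ← h]
      simp
  obtain ⟨P, hTP, hP, htot, -⟩ := hpre.exists_prime
  obtain ⟨z, hz⟩ := IsAlgClosed.exists_eval₂_eq_zero R.subtype p
    (degree_pos_of_irreducible hirr).ne'
  let ι : AdjoinRoot p →+* Ω := AdjoinRoot.lift R.subtype z hz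
  have hD : SCone (ι '' P) := by
    refine ⟨?_, ?_, ?_, ?_, ?_, ?_⟩
    · rintro _ _ ⟨x, hx, rfl⟩ ⟨y, hy, rfl⟩
      exact ⟨x + y, hP.add hx hy, by simp⟩
    · rintro _ _ ⟨x, hx, rfl⟩ ⟨y, hy, rfl⟩
      exact ⟨x * y, hP.mul hx hy, by simp⟩
    · exact ⟨1, hP.one, by simp⟩
    · rintro _ _ ⟨x, hx, rfl⟩ ⟨y, hy, rfl⟩
      rcases htot (x - y) with h | h
      · exact Or.inl ⟨_, h, by simp⟩
      · exact Or.inr ⟨_, h, by simp⟩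
    · rintro _ ⟨x, hx, rfl⟩
      refine ⟨x * (x⁻¹) ^ 2, hP.mul hx (hP.sq _), ?_⟩
      by_cases hx0 : x = 0
      · simp [hx0]
      · rw [← map_inv₀]
        congr 1
        field_simp
    · rintro ⟨x, hx, h⟩
      have : x = -1 := ι.injective (by simpa using h)
      exact hP.neg_one (this ▸ hx)
  have hCD : C ⊆ ι '' P := by
    intro c hc
    refine ⟨AdjoinRoot.of p ⟨c, Or.inl hc⟩, hTP ⟨Polynomial.C ⟨c, Or.inl hc⟩,
      WSOS.const _ ((hnn _).mpr hc), ?_⟩, ?_⟩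
    · simp
    · simp [ι]
  have hDC := hmax _ hD hCD
  have hzR : z ∈ R := by
    have hz' : ι (AdjoinRoot.root p) = z := by simp [ι]
    rcases htot (AdjoinRoot.root p) with h | h
    · exact Or.inl (hDC ⟨_, h, hz'⟩)
    · exact Or.inr (hDC ⟨_, h, by rw [map_neg, hz']⟩)
  have hroot : p.eval ⟨z, hzR⟩ = 0 := by
    apply R.subtype.injective
    rw [map_zero, ← hz]
    exact (Polynomial.eval₂_hom R.subtype (⟨z, hzR⟩ : R)).symm
  have hdvd : (X - Polynomial.C (⟨z, hzR⟩ : R)) ∣ p := dvd_iff_isRoot.mpr hroot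
  obtain ⟨u, hu⟩ := hdvd
  have huu : IsUnit u := (hirr.isUnit_or_isUnit hu).resolve_left (not_isUnit_X_sub_C _)
  obtain ⟨c, hc, rfl⟩ := Polynomial.isUnit_iff.mp huu
  rw [hu] at hp
  simp only [eval_mul, eval_sub, eval_X, eval_C] at hp
  have hsg : (a - ⟨z, hzR⟩) * (b - ⟨z, hzR⟩) < 0 := by
    by_contra hcon
    push Not at hcon
    have := mul_nonneg hcon (mul_self_nonneg c)
    nlinarith
  refine ⟨⟨z, hzR⟩, ?_, ?_, ?_⟩
  · by_contra hcon
    push Not at hcon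
    have := mul_nonneg (sub_nonneg.mpr hcon) (sub_nonneg.mpr (hcon.trans hab.le))
    exact absurd hsg (not_lt.mpr this)
  · by_contra hcon
    push Not at hcon
    have := mul_nonneg (sub_nonneg.mpr hcon) (sub_nonneg.mpr (hab.le.trans hcon))
    nlinarith
  · obtain ⟨w, rfl⟩ := hpq
    rw [eval_mul, hroot, zero_mul]

theorem scone_of_hom {A Ω : Type*} [CommRing A] [Field Ω] (θ : A →+* Ω) {P : Set A}
    (hP : PreO P) (htot : ∀ x, x ∈ P ∨ -x ∈ P) (hθ : ∀ a, θ a = 0 ↔ a ∈ P ∧ -a ∈ P) :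
    SCone {x : Ω | ∃ a ∈ P, ∃ b, θ b ≠ 0 ∧ x = θ a / θ b ^ 2} := by
  refine ⟨?_, ?_, ?_, ?_, ?_, ?_⟩
  · rintro _ _ ⟨a, ha, b, hb, rfl⟩ ⟨c, hc, d, hd, rfl⟩
    refine ⟨a * d ^ 2 + c * b ^ 2, hP.add (hP.mul ha (hP.sq d)) (hP.mul hc (hP.sq b)), b * d,
      by simp [hb, hd], ?_⟩
    simp only [map_add, map_mul, map_pow]
    field_simp
  · rintro _ _ ⟨a, ha, b, hb, rfl⟩ ⟨c, hc, d, hd, rfl⟩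
    refine ⟨a * c, hP.mul ha hc, b * d, by simp [hb, hd], ?_⟩
    simp only [map_mul]
    field_simp
  · exact ⟨1, hP.one, 1, by simp, by simp⟩
  · rintro _ _ ⟨a, ha, b, hb, rfl⟩ ⟨c, hc, d, hd, rfl⟩
    rcases htot (a * d ^ 2 - c * b ^ 2) with h | h
    · refine Or.inl ⟨_, h, b * d, by simp [hb, hd], ?_⟩
      simp only [map_sub, map_mul, map_pow]
      field_simp
    · refine Or.inr ⟨_, h, b * d, by simp [hb, hd], ?_⟩
      simp only [map_neg, map_sub, map_mul, map_pow]
      field_simp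
      ring
  · rintro _ ⟨a, ha, b, hb, rfl⟩
    by_cases h0 : θ a = 0
    · exact ⟨0, hP.zero, 1, by simp, by simp [h0]⟩
    · refine ⟨a * b ^ 2, hP.mul ha (hP.sq b), a, h0, ?_⟩
      simp only [map_mul, map_pow]
      field_simp
  · rintro ⟨a, ha, b, hb, h⟩
    have h1 : θ (a + b ^ 2) = 0 := by
      rw [eq_div_iff (pow_ne_zero 2 hb)] at h
      simp only [map_add, map_pow]
      rw [← h]; ring
    have h2 := ((hθ _).mp h1).2
    have h3 : -(b ^ 2) ∈ P := by
      have := hP.add ha h2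
      simpa using this
    have h4 : θ (b ^ 2) = 0 := (hθ _).mpr ⟨hP.sq b, h3⟩
    exact hb (by simpa using h4)

/-- A proper preordering in a commutative ring: there is a homomorphism into an ordered field
with the intermediate value property for polynomials that is nonnegative on it. -/
theorem PreO.exists_hom {A : Type u} [CommRing A] {T : Set A} (hT : PreO T) :
    ∃ (R : Type u) (_ : Field R) (_ : LinearOrder R) (_ : IsStrictOrderedRing R) (θ : A →+* R),
      IVP R ∧ ∀ a ∈ T, 0 ≤ θ a := by
  obtain ⟨P, hTP, hP, htot, hprime⟩ := hT.exists_prime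
  let I : Ideal A :=
    { carrier := {a | a ∈ P ∧ -a ∈ P}
      add_mem' := fun {a b} ha hb => ⟨hP.add ha.1 hb.1, by
        rw [neg_add]; exact hP.add ha.2 hb.2⟩
      zero_mem' := ⟨hP.zero, by simpa using hP.zero⟩
      smul_mem' := fun c x hx => by
        rcases htot c with h | h
        · exact ⟨hP.mul h hx.1, by simpa using hP.mul h hx.2⟩
        · exact ⟨by simpa using hP.mul h hx.2, by simpa using hP.mul h hx.1⟩ }
  have hI : I.IsPrime := by
    refine ⟨?_, ?_⟩
    · intro h
      have : (1 : A) ∈ I := by rw [h]; trivial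
      exact hP.neg_one this.2
    · intro a b hab
      exact hprime a b hab.1 hab.2
  let Ω := AlgebraicClosure (FractionRing (A ⧸ I))
  let θ : A →+* Ω := ((algebraMap (FractionRing (A ⧸ I)) Ω).comp
    (algebraMap (A ⧸ I) (FractionRing (A ⧸ I)))).comp (Ideal.Quotient.mk I)
  have hθ : ∀ a, θ a = 0 ↔ a ∈ I := by
    intro a
    rw [← Ideal.Quotient.eq_zero_iff_mem]
    simp only [θ, RingHom.comp_apply]
    rw [map_eq_zero_iff _ (FaithfulSMul.algebraMap_injective _ _),
      map_eq_zero_iff _ (IsFractionRing.injective _ _)]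
  have hC := scone_of_hom θ hP htot hθ
  obtain ⟨R, lo, so, hivp, hR⟩ := hC.exists_realClosed
  have hmem : ∀ a ∈ P, ∃ h : θ a ∈ R, (0 : R) ≤ ⟨θ a, h⟩ := fun a ha =>
    hR _ ⟨a, ha, 1, by simp, by simp⟩
  have hmem' : ∀ a, θ a ∈ R := by
    intro a
    rcases htot a with h | h
    · exact (hmem a h).1
    · have := (hmem _ h).1
      rw [map_neg] at this
      exact (neg_mem_iff (H := R)).mp this
  refine ⟨R, inferInstance, lo, so, θ.codRestrict R hmem', hivp, fun a ha => ?_⟩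
  exact (hmem a (hTP ha)).2

end Part2

section Part3

open Polynomial

section ivp
variable {R : Type*} [Field R] [LinearOrder R] [IsStrictOrderedRing R]

theorem IVP.rolle_aux (hR : IVP R) (m n : ℕ) (g : R[X]) (a b : R) (hab : a < b)
    (ha : g.eval a ≠ 0) (hb : g.eval b ≠ 0) (hno : ∀ c, a < c → c < b → g.eval c ≠ 0) :
    ∃ c, a < c ∧ c < b ∧
      (derivative ((X - C a) ^ (m + 1) * ((X - C b) ^ (n + 1) * g))).eval c = 0 := by
  let g1 : R[X] := C ((m : R) + 1) * (X - C b) * g + C ((n : R) + 1) * (X - C a) * g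
    + (X - C a) * (X - C b) * derivative g
  have hder : derivative ((X - C a) ^ (m + 1) * ((X - C b) ^ (n + 1) * g)) =
      (X - C a) ^ m * (X - C b) ^ n * g1 := by
    simp only [derivative_mul, derivative_X_sub_C_pow, g1]
    simp only [Nat.add_sub_cancel, map_add, map_natCast, map_one, pow_succ, Nat.cast_add,
      Nat.cast_one]
    ring
  have hgab : 0 < g.eval a * g.eval b := by
    by_contra hcon
    push Not at hcon
    have hlt : g.eval a * g.eval b < 0 := lt_of_le_of_ne hcon (mul_ne_zero ha hb)
    obtain ⟨c, h1, h2, h3⟩ := hR g a b hab hlt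
    exact hno c h1 h2 h3
  have h1 : g1.eval a * g1.eval b < 0 := by
    have e1 : g1.eval a = ((m : R) + 1) * (a - b) * g.eval a := by simp [g1]
    have e2 : g1.eval b = ((n : R) + 1) * (b - a) * g.eval b := by simp [g1]
    rw [e1, e2]
    have : 0 < ((m : R) + 1) * ((n : R) + 1) * (b - a) ^ 2 * (g.eval a * g.eval b) := by
      have : 0 < b - a := sub_pos.mpr hab
      positivity
    nlinarith
  obtain ⟨c, h2, h3, h4⟩ := hR g1 a b hab h1
  exact ⟨c, h2, h3, by rw [hder, eval_mul, h4, mul_zero]⟩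

theorem IVP.rolle (hR : IVP R) (f : R[X]) (a b : R) (hab : a < b) (h : f.eval a = f.eval b) :
    ∃ c, a < c ∧ c < b ∧ (derivative f).eval c = 0 := by
  classical
  by_cases hp : f - C (f.eval a) = 0
  · obtain ⟨c, hc1, hc2⟩ := exists_between hab
    refine ⟨c, hc1, hc2, ?_⟩
    rw [sub_eq_zero.mp hp]
    simp
  set p := f - C (f.eval a) with hpdef
  have hpa : p.eval a = 0 := by simp [hpdef]
  have hpb : p.eval b = 0 := by simp [hpdef, h]
  have hder : derivative p = derivative f := by simp [hpdef]
  -- minimal root above a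
  obtain ⟨b', hb', hmin⟩ := Finset.exists_min_image (p.roots.toFinset.filter (fun c => a < c)) id
    ⟨b, by simp [hp, hpb, hab]⟩
  simp only [Finset.mem_filter, Multiset.mem_toFinset, mem_roots hp, IsRoot.def, id] at hb' hmin
  have hb'b : b' ≤ b := hmin b ⟨hpb, hab⟩
  obtain ⟨q, hq, hqa⟩ := p.exists_eq_pow_rootMultiplicity_mul_and_not_dvd hp a
  have hq0 : q ≠ 0 := by
    rintro rfl
    simp at hqa
  obtain ⟨g, hg, hgb⟩ := q.exists_eq_pow_rootMultiplicity_mul_and_not_dvd hq0 b'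
  rw [dvd_iff_isRoot, IsRoot.def] at hqa hgb
  have hqb : q.eval b' = 0 := by
    have := hb'.1
    rw [hq, eval_mul] at this
    rcases mul_eq_zero.mp this with h | h
    · simp only [eval_pow, eval_sub, eval_X, eval_C] at h
      exact absurd (eq_zero_of_pow_eq_zero h) (sub_ne_zero.mpr hb'.2.ne')
    · exact h
  have hm : 0 < rootMultiplicity a p := (rootMultiplicity_pos hp).mpr hpa
  have hn : 0 < rootMultiplicity b' q := (rootMultiplicity_pos hq0).mpr hqb
  obtain ⟨m, hm⟩ := Nat.exists_eq_succ_of_ne_zero hm.ne'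
  obtain ⟨n, hn⟩ := Nat.exists_eq_succ_of_ne_zero hn.ne'
  rw [hm] at hq
  rw [hn] at hg
  have hga : g.eval a ≠ 0 := by
    intro h0
    apply hqa
    rw [hg, eval_mul, h0, mul_zero]
  obtain ⟨c, h1, h2, h3⟩ := hR.rolle_aux m n g a b' hb'.2 hga hgb (by
    intro c h1 h2 h3
    have : p.eval c = 0 := by rw [hq, hg, eval_mul, eval_mul, h3, mul_zero, mul_zero]
    exact absurd (hmin c ⟨this, h1⟩) (not_le.mpr h2))
  refine ⟨c, h1, h2.trans_le hb'b, ?_⟩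
  rw [← hder, hq, hg]
  exact h3

theorem IVP.mono (hR : IVP R) (f : R[X]) (a b : R) (hab : a < b)
    (h : ∀ c, a < c → c < b → 0 < (derivative f).eval c) : f.eval a < f.eval b := by
  obtain ⟨c, h1, h2, h3⟩ := hR.rolle (f * C (b - a) - C (f.eval b - f.eval a) * X) a b hab
    (by simp; ring)
  simp at h3
  have h4 := h c h1 h2
  have h5 : 0 < b - a := sub_pos.mpr hab
  nlinarith [mul_pos h4 h5]

theorem eval_large_pos : ∀ (n : ℕ) (p : R[X]), p.natDegree ≤ n → 0 < p.leadingCoeff →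
    ∃ M ε : R, 0 < ε ∧ ∀ x, M ≤ x → ε ≤ p.eval x := by
  intro n
  induction n with
  | zero =>
    intro p hp hlc
    have := eq_C_of_natDegree_le_zero hp
    rw [this] at hlc ⊢
    simp at hlc
    exact ⟨0, p.coeff 0, hlc, by simp⟩
  | succ n ih =>
    intro p hp hlc
    by_cases hd : p.natDegree = 0
    · have := eq_C_of_natDegree_eq_zero hd
      rw [this] at hlc ⊢
      simp at hlc
      exact ⟨0, p.coeff 0, hlc, by simp⟩
    · have hdx : (divX p).natDegree = p.natDegree - 1 := natDegree_divX_eq_natDegree_tsub_one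
      obtain ⟨M, ε, hε, hM⟩ := ih (divX p) (by omega) (by
        rw [leadingCoeff, hdx, coeff_divX]
        rwa [show p.natDegree - 1 + 1 = p.natDegree by omega])
      refine ⟨max M (max 0 ((ε - p.coeff 0) / ε)), ε, hε, fun x hx => ?_⟩
      have h1 : M ≤ x := (le_max_left _ _).trans hx
      have h2 : 0 ≤ x := ((le_max_left _ _).trans (le_max_right _ _)).trans hx
      have h3 : (ε - p.coeff 0) / ε ≤ x := ((le_max_right _ _).trans (le_max_right _ _)).trans hx
      have h4 := hM x h1
      rw [div_le_iff₀ hε] at h3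
      have h5 : p.eval x = (divX p).eval x * x + p.coeff 0 := by
        conv_lhs => rw [← divX_mul_X_add p]
        simp
      rw [h5]
      nlinarith [mul_le_mul_of_nonneg_right h4 h2]

theorem sign_large (p : R[X]) : ∃ M : R, ∀ x, M ≤ x →
    SignType.sign (p.eval x) = SignType.sign p.leadingCoeff := by
  rcases lt_trichotomy p.leadingCoeff 0 with h | h | h
  · obtain ⟨M, ε, hε, hM⟩ := eval_large_pos _ (-p) le_rfl (by simpa using h)
    refine ⟨M, fun x hx => ?_⟩
    have := hM x hx
    rw [eval_neg] at this
    rw [sign_neg h, sign_neg (by linarith)]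
  · rw [leadingCoeff_eq_zero.mp h]
    exact ⟨0, by simp⟩
  · obtain ⟨M, ε, hε, hM⟩ := eval_large_pos _ p le_rfl h
    refine ⟨M, fun x hx => ?_⟩
    have := hM x hx
    rw [sign_pos h, sign_pos (by linarith)]

theorem sign_small (p : R[X]) : ∃ M : R, ∀ x, x ≤ M →
    SignType.sign (p.eval x) = SignType.sign ((-1) ^ p.natDegree * p.leadingCoeff) := by
  obtain ⟨M, hM⟩ := sign_large (p.comp (-X))
  refine ⟨-M, fun x hx => ?_⟩
  have := hM (-x) (by linarith)
  rw [eval_comp] at this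
  simp only [eval_neg, eval_X, neg_neg] at this
  rw [this, leadingCoeff_comp (by simp)]
  simp [mul_comm]

end ivp

section cells
variable {R R' : Type*} [Field R] [LinearOrder R] [IsStrictOrderedRing R]
  [Field R'] [LinearOrder R'] [IsStrictOrderedRing R']

/-- a finite partial order isomorphism -/
def PChain (P : Finset (R × R')) : Prop := ∀ q ∈ P, ∀ r ∈ P, q.1 < r.1 ↔ q.2 < r.2

/-- being in corresponding cells -/
def Cell (P : Finset (R × R')) (x : R) (x' : R') : Prop :=
  ∀ q ∈ P, (x < q.1 ↔ x' < q.2) ∧ (q.1 < x ↔ q.2 < x')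

def swapF (P : Finset (R × R')) : Finset (R' × R) := P.map (Equiv.prodComm R R').toEmbedding

theorem mem_swapF (P : Finset (R × R')) (q : R' × R) : q ∈ swapF P ↔ (q.2, q.1) ∈ P := by
  obtain ⟨a, b⟩ := q
  simp [swapF]

theorem Cell.swap {P : Finset (R × R')} {x : R} {x' : R'} (h : Cell P x x') :
    Cell (swapF P) x' x := by
  intro q hq
  rw [mem_swapF] at hq
  exact ⟨(h _ hq).1.symm, (h _ hq).2.symm⟩

theorem Cell.unswap {P : Finset (R × R')} {x : R} {x' : R'} (h : Cell (swapF P) x' x) :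
    Cell P x x' := by
  intro q hq
  have := h (q.2, q.1) (by rw [mem_swapF]; exact hq)
  exact ⟨this.1.symm, this.2.symm⟩

theorem PChain.swap {P : Finset (R × R')} (h : PChain P) : PChain (swapF P) := by
  intro q hq r hr
  rw [mem_swapF] at hq hr
  exact (h _ hq _ hr).symm

theorem Cell.eq_iff {P : Finset (R × R')} {x : R} {x' : R'} (h : Cell P x x') {q : R × R'}
    (hq : q ∈ P) : x = q.1 ↔ x' = q.2 := by
  have := h q hq
  constructor
  · intro e
    refine le_antisymm (not_lt.mp fun h1 => ?_) (not_lt.mp fun h1 => ?_)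
    · exact absurd (this.2.mpr h1) (by simp [e])
    · exact absurd (this.1.mpr h1) (by simp [e])
  · intro e
    refine le_antisymm (not_lt.mp fun h1 => ?_) (not_lt.mp fun h1 => ?_)
    · exact absurd (this.2.mp h1) (by simp [e])
    · exact absurd (this.1.mp h1) (by simp [e])

theorem PChain.cell {P : Finset (R × R')} (h : PChain P) {q : R × R'} (hq : q ∈ P) :
    Cell P q.1 q.2 := fun r hr => ⟨h q hq r hr, h r hr q hq⟩

theorem PChain.exists_cell {P : Finset (R × R')} (h : PChain P) (x : R) :
    ∃ x' : R', Cell P x x' := by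
  classical
  by_cases hx : ∃ q ∈ P, q.1 = x
  · obtain ⟨q, hq, rfl⟩ := hx
    exact ⟨q.2, h.cell hq⟩
  · push Not at hx
    obtain ⟨m, h1, h2⟩ := Order.exists_between_finsets
      (lo := (P.filter (fun q => q.1 < x)).image Prod.snd)
      (hi := (P.filter (fun q => x < q.1)).image Prod.snd) (by
        intro a ha b hb
        simp only [Finset.mem_image, Finset.mem_filter] at ha hb
        obtain ⟨q, ⟨hq, hqx⟩, rfl⟩ := ha
        obtain ⟨r, ⟨hr, hrx⟩, rfl⟩ := hb
        exact (h q hq r hr).mp (hqx.trans hrx))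
    refine ⟨m, fun q hq => ?_⟩
    rcases lt_or_gt_of_ne (hx q hq) with hlt | hgt
    · have := h1 q.2 (Finset.mem_image_of_mem _ (Finset.mem_filter.mpr ⟨hq, hlt⟩))
      exact ⟨iff_of_false hlt.not_gt this.not_gt, iff_of_true hlt this⟩
    · have := h2 q.2 (Finset.mem_image_of_mem _ (Finset.mem_filter.mpr ⟨hq, hgt⟩))
      exact ⟨iff_of_true hgt this, iff_of_false hgt.not_gt this.not_gt⟩

theorem PChain.exists_cell' {P : Finset (R × R')} (h : PChain P) (x' : R') :
    ∃ x : R, Cell P x x' := by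
  obtain ⟨x, hx⟩ := h.swap.exists_cell x'
  exact ⟨x, hx.unswap⟩

/-- the open cell of a non-node is infinite -/
theorem exists_interval (P : Finset (R × R')) (x : R) (hx : ∀ q ∈ P, q.1 ≠ x) :
    ∃ a b, a < x ∧ x < b ∧ ∀ y, a < y → y < b → ∀ x', Cell P x x' → Cell P y x' := by
  classical
  obtain ⟨a, h1, h2⟩ := Order.exists_between_finsets
      (lo := (P.filter (fun q => q.1 < x)).image Prod.fst) (hi := {x}) (by
        intro a ha b hb
        simp only [Finset.mem_image, Finset.mem_filter] at ha
        obtain ⟨q, ⟨hq, hqx⟩, rfl⟩ := ha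
        simp at hb
        rw [hb]; exact hqx)
  obtain ⟨b, h3, h4⟩ := Order.exists_between_finsets (lo := {x})
      (hi := (P.filter (fun q => x < q.1)).image Prod.fst)  (by
        intro b hb a ha
        simp only [Finset.mem_image, Finset.mem_filter] at ha
        obtain ⟨q, ⟨hq, hqx⟩, rfl⟩ := ha
        simp at hb
        rw [hb]; exact hqx)
  refine ⟨a, b, h2 x (by simp), h3 x (by simp), fun y hay hyb x' hc q hq => ?_⟩
  rw [← (hc q hq).1, ← (hc q hq).2]
  rcases lt_or_gt_of_ne (hx q hq) with hlt | hgt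
  · have := (h1 q.1 (Finset.mem_image_of_mem _ (Finset.mem_filter.mpr ⟨hq, hlt⟩))).trans hay
    exact ⟨iff_of_false this.not_gt hlt.not_gt, iff_of_true this hlt⟩
  · have := hyb.trans (h4 q.1 (Finset.mem_image_of_mem _ (Finset.mem_filter.mpr ⟨hq, hgt⟩)))
    exact ⟨iff_of_true this hgt, iff_of_false this.not_gt hgt.not_gt⟩

/-- signs of `f` and `g` agree on corresponding cells -/
def Match (P : Finset (R × R')) (f : R[X]) (g : R'[X]) : Prop :=
  ∀ x x', Cell P x x' → SignType.sign (f.eval x) = SignType.sign (g.eval x')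

theorem Match.swap {P : Finset (R × R')} {f : R[X]} {g : R'[X]} (h : Match P f g) :
    Match (swapF P) g f := fun x' x hc => (h x x' hc.unswap).symm

theorem Match.mono {P Q : Finset (R × R')} {f : R[X]} {g : R'[X]} (h : Match P f g)
    (hPQ : P ⊆ Q) : Match Q f g := fun x' x hc => h _ _ (fun q hq => hc q (hPQ hq))

theorem Match.ne_zero {P : Finset (R × R')} (hP : PChain P) {f : R[X]} {g : R'[X]}
    (h : Match P f g) (hf : f ≠ 0) (x : R) (hx : ∀ q ∈ P, q.1 ≠ x) : f.eval x ≠ 0 := by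
  intro h0
  obtain ⟨a, b, h1, h2, h3⟩ := exists_interval P x hx
  obtain ⟨x', hx'⟩ := hP.exists_cell x
  have hs := h x x' hx'
  rw [h0, sign_zero] at hs
  refine hf (Polynomial.eq_zero_of_infinite_isRoot f
    ((Set.Ioo_infinite (h1.trans h2)).mono fun y hy => ?_))
  have := h y x' (h3 y hy.1 hy.2 x' hx')
  rw [← hs] at this
  exact sign_eq_zero_iff.mp this

theorem Match.eq_zero {P : Finset (R × R')} (hP : PChain P) {f : R[X]} {g : R'[X]}
    (h : Match P f g) (hf : f = 0) : g = 0 := by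
  apply Polynomial.funext
  intro x'
  obtain ⟨x, hx⟩ := hP.exists_cell' x'
  have := h x x' hx
  rw [hf] at this
  simp at this
  have := sign_eq_zero_iff.mp this.symm
  simpa using this

end cells

end Part3

section Part4

open Polynomial

section step
variable {R R' : Type*} [Field R] [LinearOrder R] [IsStrictOrderedRing R]
  [Field R'] [LinearOrder R'] [IsStrictOrderedRing R']

theorem local_aux1 (hR : IVP R) (hR' : IVP R') {f : R[X]} {g : R'[X]} {a b x : R} {a' b' x' : R'}
    (hf : ∀ c, a < c → c < b → 0 < (derivative f).eval c)
    (hg : ∀ c, a' < c → c < b' → 0 < (derivative g).eval c)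
    (hsa : SignType.sign (f.eval a) = SignType.sign (g.eval a'))
    (hsb : SignType.sign (f.eval b) = SignType.sign (g.eval b'))
    (hax : a < x) (hxb : x < b) (hax' : a' < x') (hxb' : x' < b')
    (hroots : ∀ r r', a < r → r < b → a' < r' → r' < b' → f.eval r = 0 → g.eval r' = 0 →
      (x < r ↔ x' < r') ∧ (r < x ↔ r' < x')) (h0 : f.eval x = 0) : g.eval x' = 0 := by
  have h1 := hR.mono f a x hax (fun c h1 h2 => hf c h1 (h2.trans hxb))
  have h2 := hR.mono f x b hxb (fun c h1 h2 => hf c (hax.trans h1) h2)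
  rw [h0] at h1 h2
  rw [sign_neg h1] at hsa
  rw [sign_pos h2] at hsb
  have h3 := sign_eq_neg_one_iff.mp hsa.symm
  have h4 := sign_eq_one_iff.mp hsb.symm
  obtain ⟨r', h5, h6, h7⟩ := hR' g a' b' (hax'.trans hxb') (mul_neg_of_neg_of_pos h3 h4)
  have := hroots x r' hax hxb h5 h6 h0 h7
  simp only [lt_irrefl, false_iff, not_lt] at this
  rw [le_antisymm this.2 this.1, h7]

theorem local_aux2 (hR : IVP R) (hR' : IVP R') {f : R[X]} {g : R'[X]} {a b x : R} {a' b' x' : R'}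
    (hf : ∀ c, a < c → c < b → 0 < (derivative f).eval c)
    (hg : ∀ c, a' < c → c < b' → 0 < (derivative g).eval c)
    (hsa : SignType.sign (f.eval a) = SignType.sign (g.eval a'))
    (hsb : SignType.sign (f.eval b) = SignType.sign (g.eval b'))
    (hax : a < x) (hxb : x < b) (hax' : a' < x') (hxb' : x' < b')
    (hroots : ∀ r r', a < r → r < b → a' < r' → r' < b' → f.eval r = 0 → g.eval r' = 0 →
      (x < r ↔ x' < r') ∧ (r < x ↔ r' < x')) (h0 : 0 < f.eval x) : 0 < g.eval x' := by
  rcases lt_trichotomy (g.eval x') 0 with h | h | h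
  · have h1 := (hR'.mono g a' x' hax' (fun c h1 h2 => hg c h1 (h2.trans hxb'))).trans h
    have h2 := h0.trans (hR.mono f x b hxb (fun c h1 h2 => hf c (hax.trans h1) h2))
    rw [sign_neg h1] at hsa
    rw [sign_pos h2] at hsb
    have h3 := sign_eq_neg_one_iff.mp hsa
    have h4 := sign_eq_one_iff.mp hsb.symm
    obtain ⟨r', h5, h6, h7⟩ := hR' g x' b' hxb' (mul_neg_of_neg_of_pos h h4)
    obtain ⟨r, h8, h9, h10⟩ := hR f a x hax (mul_neg_of_neg_of_pos h3 h0)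
    have := hroots r r' h8 (h9.trans hxb) (hax'.trans h5) h6 h10 h7
    exact absurd (this.2.mp h9) h5.not_gt
  · have := local_aux1 hR' hR hg hf hsa.symm hsb.symm hax' hxb' hax hxb
      (fun r r' h1 h2 h3 h4 h5 h6 => ⟨(hroots r' r h3 h4 h1 h2 h6 h5).1.symm,
        (hroots r' r h3 h4 h1 h2 h6 h5).2.symm⟩) h
    exact absurd this h0.ne'
  · exact h

theorem local_sign (hR : IVP R) (hR' : IVP R') {f : R[X]} {g : R'[X]} {a b x : R} {a' b' x' : R'}
    (hf : ∀ c, a < c → c < b → 0 < (derivative f).eval c)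
    (hg : ∀ c, a' < c → c < b' → 0 < (derivative g).eval c)
    (hsa : SignType.sign (f.eval a) = SignType.sign (g.eval a'))
    (hsb : SignType.sign (f.eval b) = SignType.sign (g.eval b'))
    (hax : a < x) (hxb : x < b) (hax' : a' < x') (hxb' : x' < b')
    (hroots : ∀ r r', a < r → r < b → a' < r' → r' < b' → f.eval r = 0 → g.eval r' = 0 →
      (x < r ↔ x' < r') ∧ (r < x ↔ r' < x')) :
    SignType.sign (f.eval x) = SignType.sign (g.eval x') := by
  have hroots' : ∀ r r', a' < r → r < b' → a < r' → r' < b → g.eval r = 0 → f.eval r' = 0 →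
      (x' < r ↔ x < r') ∧ (r < x' ↔ r' < x) :=
      (fun r r' h1 h2 h3 h4 h5 h6 => ⟨(hroots r' r h3 h4 h1 h2 h6 h5).1.symm,
        (hroots r' r h3 h4 h1 h2 h6 h5).2.symm⟩)
  have A1 := local_aux1 hR hR' hf hg hsa hsb hax hxb hax' hxb' hroots
  have A2 := local_aux2 hR hR' hf hg hsa hsb hax hxb hax' hxb' hroots
  have B1 := local_aux1 hR' hR hg hf hsa.symm hsb.symm hax' hxb' hax hxb hroots'
  have B2 := local_aux2 hR' hR hg hf hsa.symm hsb.symm hax' hxb' hax hxb hroots'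
  rcases lt_trichotomy (f.eval x) 0 with h | h | h
  · rcases lt_trichotomy (g.eval x') 0 with h' | h' | h'
    · rw [sign_neg h, sign_neg h']
    · exact absurd (B1 h') h.ne
    · exact absurd (B2 h') h.not_gt
  · rw [h, A1 h]; simp
  · rw [sign_pos h, sign_pos (A2 h)]

theorem exists_ends_aux {S : Type*} [Field S] [LinearOrder S] [IsStrictOrderedRing S]
    (s : Finset S) (m M : S) : ∃ u v, (∀ q ∈ s, u < q ∧ q < v) ∧ u ≤ m ∧ M ≤ v ∧ u < v := by
  classical
  obtain ⟨u, h1, h2⟩ := Order.exists_between_finsets (lo := (∅ : Finset S))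
    (hi := insert m s) (by simp)
  obtain ⟨v, h3, h4⟩ := Order.exists_between_finsets (lo := insert u (insert M s))
    (hi := (∅ : Finset S)) (by simp)
  exact ⟨u, v, fun q hq => ⟨h2 q (by simp [hq]), h3 q (by simp [hq])⟩, (h2 m (by simp)).le,
    (h3 M (by simp)).le, h3 u (by simp)⟩

theorem exists_ends (P : Finset (R × R')) (m0 M0 : R) (m0' M0' : R') :
    ∃ u v : R × R', (∀ q ∈ P, u.1 < q.1 ∧ u.2 < q.2 ∧ q.1 < v.1 ∧ q.2 < v.2) ∧
      u.1 ≤ m0 ∧ u.2 ≤ m0' ∧ M0 ≤ v.1 ∧ M0' ≤ v.2 ∧ u.1 < v.1 ∧ u.2 < v.2 := by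
  classical
  obtain ⟨u1, v1, h1, h2, h3, h4⟩ := exists_ends_aux (P.image Prod.fst) m0 M0
  obtain ⟨u2, v2, h5, h6, h7, h8⟩ := exists_ends_aux (P.image Prod.snd) m0' M0'
  refine ⟨(u1, u2), (v1, v2), fun q hq => ?_, h2, h6, h3, h7, h4, h8⟩
  have a := h1 q.1 (Finset.mem_image_of_mem _ hq)
  have b := h5 q.2 (Finset.mem_image_of_mem _ hq)
  exact ⟨a.1, b.1, a.2, b.2⟩

theorem step_main (hR : IVP R) (hR' : IVP R') {P : Finset (R × R')} (hP : PChain P)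
    {f : R[X]} {g : R'[X]} (hm : Match P (derivative f) (derivative g))
    (hf' : derivative f ≠ 0) (hg' : derivative g ≠ 0)
    (hn : ∀ q ∈ P, SignType.sign (f.eval q.1) = SignType.sign (g.eval q.2))
    (u v : R × R') (hu : u ∈ P) (hv : v ∈ P)
    (hlo : ∀ x x', x ≤ u.1 → x' ≤ u.2 → SignType.sign (f.eval x) = SignType.sign (g.eval x'))
    (hhi : ∀ x x', v.1 ≤ x → v.2 ≤ x' → SignType.sign (f.eval x) = SignType.sign (g.eval x')) :
    ∃ P', P ⊆ P' ∧ PChain P' ∧ Match P' f g := by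
  classical
  have hf : f ≠ 0 := by rintro rfl; simp at hf'
  have hg : g ≠ 0 := by rintro rfl; simp at hg'
  let N : Finset (R × R') := (f.roots.toFinset ×ˢ g.roots.toFinset).filter (fun q => Cell P q.1 q.2)
  have hN : ∀ q, q ∈ N ↔ (f.eval q.1 = 0 ∧ g.eval q.2 = 0) ∧ Cell P q.1 q.2 := by
    intro q
    simp [N, mem_roots hf, mem_roots hg]
  refine ⟨P ∪ N, Finset.subset_union_left, ?_, ?_⟩
  · intro q hq r hr
    rw [Finset.mem_union] at hq hr
    rcases hq with hq | hq
    · rcases hr with hr | hr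
      · exact hP q hq r hr
      · exact (((hN r).mp hr).2 q hq).2
    · rcases hr with hr | hr
      · exact (((hN q).mp hq).2 r hr).1
      · obtain ⟨⟨q1, q2⟩, qc⟩ := (hN q).mp hq
        obtain ⟨⟨r1, r2⟩, rc⟩ := (hN r).mp hr
        constructor
        · intro hlt
          obtain ⟨c, h1, h2, h3⟩ := hR.rolle f _ _ hlt (q1.trans r1.symm)
          by_contra hcon
          refine hm.ne_zero hP hf' c (fun n hn hnc => ?_) h3
          subst hnc
          exact hcon (((qc n hn).1.mp h1).trans ((rc n hn).2.mp h2))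
        · intro hlt
          obtain ⟨c, h1, h2, h3⟩ := hR'.rolle g _ _ hlt (q2.trans r2.symm)
          by_contra hcon
          refine hm.swap.ne_zero hP.swap hg' c (fun n hn hnc => ?_) h3
          rw [mem_swapF] at hn
          subst hnc
          exact hcon (((qc _ hn).1.mpr h1).trans ((rc _ hn).2.mpr h2))
  · intro x x' hc
    have hcP : Cell P x x' := fun q hq => hc q (Finset.mem_union_left _ hq)
    by_cases hx : ∃ q ∈ P, x = q.1
    · obtain ⟨q, hq, e⟩ := hx
      rw [(hcP.eq_iff hq).mp e, e]
      exact hn q hq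
    push Not at hx
    rcases lt_or_ge u.1 x with hux | hux
    swap
    · exact hlo x x' hux (not_lt.mp fun h => (not_lt.mpr hux) ((hcP u hu).2.mpr h))
    rcases lt_or_ge x v.1 with hxv | hxv
    swap
    · exact hhi x x' hxv (not_lt.mp fun h => (not_lt.mpr hxv) ((hcP v hv).1.mpr h))
    obtain ⟨s, hs, hsmax⟩ := Finset.exists_max_image (P.filter (fun q => q.1 < x)) Prod.fst
      ⟨u, by simp [hu, hux]⟩
    obtain ⟨t, ht, htmin⟩ := Finset.exists_min_image (P.filter (fun q => x < q.1)) Prod.fst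
      ⟨v, by simp [hv, hxv]⟩
    rw [Finset.mem_filter] at hs ht
    have hs' := (hcP s hs.1).2.mp hs.2
    have ht' := (hcP t ht.1).1.mp ht.2
    have hcell : ∀ y y', s.1 < y → y < t.1 → s.2 < y' → y' < t.2 → Cell P y y' := by
      intro y y' h1 h2 h3 h4 q hq
      rcases lt_or_gt_of_ne (hx q hq) with hlt | hgt
      · have k1 := htmin q (by simp [hq, hlt])
        have k2 : t.2 ≤ q.2 := not_lt.mp fun h => (not_lt.mpr k1) ((hP q hq t ht.1).mpr h)
        have k3 := h2.trans_le k1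
        have k4 := h4.trans_le k2
        exact ⟨iff_of_true k3 k4, iff_of_false k3.not_gt k4.not_gt⟩
      · have k1 := hsmax q (by simp [hq, hgt])
        have k2 : q.2 ≤ s.2 := not_lt.mp fun h => (not_lt.mpr k1) ((hP s hs.1 q hq).mpr h)
        have k3 := k1.trans_lt h1
        have k4 := k2.trans_lt h3
        exact ⟨iff_of_false k3.not_gt k4.not_gt, iff_of_true k3 k4⟩
    have hroots : ∀ r r', s.1 < r → r < t.1 → s.2 < r' → r' < t.2 → f.eval r = 0 →
        g.eval r' = 0 → (x < r ↔ x' < r') ∧ (r < x ↔ r' < x') := by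
      intro r r' h1 h2 h3 h4 h5 h6
      exact hc (r, r') (Finset.mem_union_right _ ((hN _).mpr ⟨⟨h5, h6⟩, hcell _ _ h1 h2 h3 h4⟩))
    have hd0 := hm.ne_zero hP hf' x (fun q hq h => hx q hq h.symm)
    have hds := hm x x' hcP
    rcases lt_or_gt_of_ne hd0 with hlt | hgt
    · have hlt' : (derivative g).eval x' < 0 := by
        rw [sign_neg hlt] at hds
        exact sign_eq_neg_one_iff.mp hds.symm
      have := local_sign hR hR' (f := -f) (g := -g) (a := s.1) (b := t.1) (a' := s.2) (b' := t.2)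
        (x := x) (x' := x') (fun c h1 h2 => by
          have := hm c x' (hcell _ _ h1 h2 hs' ht')
          rw [sign_neg hlt'] at this
          have := sign_eq_neg_one_iff.mp this
          simpa using this) (fun c h1 h2 => by
          have := hm x c (hcell _ _ hs.2 ht.2 h1 h2)
          rw [sign_neg hlt] at this
          have := sign_eq_neg_one_iff.mp this.symm
          simpa using this)
        (by simpa [Left.sign_neg] using hn s hs.1) (by simpa [Left.sign_neg] using hn t ht.1)
        hs.2 ht.2 hs' ht' (by simpa using hroots)
      simpa [Left.sign_neg] using this
    · have hgt' : 0 < (derivative g).eval x' := by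
        rw [sign_pos hgt] at hds
        exact sign_eq_one_iff.mp hds.symm
      exact local_sign hR hR' (a := s.1) (b := t.1) (a' := s.2) (b' := t.2)
        (x := x) (x' := x') (fun c h1 h2 => by
          have := hm c x' (hcell _ _ h1 h2 hs' ht')
          rw [sign_pos hgt'] at this
          exact sign_eq_one_iff.mp this) (fun c h1 h2 => by
          have := hm x c (hcell _ _ hs.2 ht.2 h1 h2)
          rw [sign_pos hgt] at this
          exact sign_eq_one_iff.mp this.symm)
        (hn s hs.1) (hn t ht.1)
        hs.2 ht.2 hs' ht' hroots

theorem step (hR : IVP R) (hR' : IVP R') {P : Finset (R × R')} (hP : PChain P)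
    {f : R[X]} {g : R'[X]} (hm : Match P (derivative f) (derivative g))
    (hf' : derivative f ≠ 0) (hg' : derivative g ≠ 0)
    (hn : ∀ q ∈ P, SignType.sign (f.eval q.1) = SignType.sign (g.eval q.2))
    (hdeg : f.natDegree = g.natDegree)
    (hlc : SignType.sign f.leadingCoeff = SignType.sign g.leadingCoeff) :
    ∃ P', P ⊆ P' ∧ PChain P' ∧ Match P' f g := by
  classical
  obtain ⟨M, hM⟩ := sign_large f
  obtain ⟨M', hM'⟩ := sign_large g
  obtain ⟨m, hmm⟩ := sign_small f
  obtain ⟨m', hmm'⟩ := sign_small g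
  obtain ⟨u, v, h1, h2, h3, h4, h5, h6, h7⟩ := exists_ends P m M m' M'
  have hlo : ∀ x x', x ≤ u.1 → x' ≤ u.2 →
      SignType.sign (f.eval x) = SignType.sign (g.eval x') := by
    intro x x' hx hx'
    rw [hmm x (hx.trans h2), hmm' x' (hx'.trans h3), sign_mul, sign_mul, hlc, hdeg, sign_pow,
      sign_pow]
    simp [Left.sign_neg]
  have hhi : ∀ x x', v.1 ≤ x → v.2 ≤ x' →
      SignType.sign (f.eval x) = SignType.sign (g.eval x') := by
    intro x x' hx hx'
    rw [hM x (h4.trans hx), hM' x' (h5.trans hx'), hlc]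
  have hsub : P ⊆ insert u (insert v P) := fun q hq => by simp [hq]
  have hch : PChain (insert u (insert v P)) := by
    have a1 := h6.not_gt
    have a2 := h7.not_gt
    intro q hq r hr
    simp only [Finset.mem_insert] at hq hr
    rcases hq with rfl | rfl | hq <;> rcases hr with rfl | rfl | hr
    · simp
    · simp [*]
    · have := h1 r hr
      exact iff_of_true this.1 this.2.1
    · simp [a1, a2]
    · simp
    · have := h1 r hr
      exact iff_of_false this.2.2.1.not_gt this.2.2.2.not_gt
    · have := h1 q hq
      exact iff_of_false this.1.not_gt this.2.1.not_gt
    · have := h1 q hq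
      exact iff_of_true this.2.2.1 this.2.2.2
    · exact hP q hq r hr
  obtain ⟨P', k1, k2, k3⟩ := step_main hR hR' hch (hm.mono hsub) hf' hg' (by
    intro q hq
    simp only [Finset.mem_insert] at hq
    rcases hq with rfl | rfl | hq
    · exact hlo _ _ le_rfl le_rfl
    · exact hhi _ _ le_rfl le_rfl
    · exact hn q hq) u v (by simp) (by simp) hlo hhi
  exact ⟨P', hsub.trans k1, k2, k3⟩

end step

end Part4

section Part5

open Polynomial

section prune
variable {R R' : Type*} [Field R] [LinearOrder R] [IsStrictOrderedRing R]
  [Field R'] [LinearOrder R'] [IsStrictOrderedRing R']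

theorem IVP.root_of_sign (hR : IVP R) (g : R[X]) (a b : R) (hab : a < b)
    (h : SignType.sign (g.eval a) ≠ SignType.sign (g.eval b)) :
    ∃ c, a ≤ c ∧ c ≤ b ∧ g.eval c = 0 := by
  by_cases ha : g.eval a = 0
  · exact ⟨a, le_rfl, hab.le, ha⟩
  by_cases hb : g.eval b = 0
  · exact ⟨b, hab.le, le_rfl, hb⟩
  have : g.eval a * g.eval b < 0 := by
    rcases lt_or_gt_of_ne ha with h1 | h1 <;> rcases lt_or_gt_of_ne hb with h2 | h2
    · rw [sign_neg h1, sign_neg h2] at h; exact absurd rfl h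
    · exact mul_neg_of_neg_of_pos h1 h2
    · exact mul_neg_of_pos_of_neg h1 h2
    · rw [sign_pos h1, sign_pos h2] at h; exact absurd rfl h
  obtain ⟨c, h1, h2, h3⟩ := hR g a b hab this
  exact ⟨c, h1.le, h2.le, h3⟩

theorem prune (hR' : IVP R') {P : Finset (R × R')} (hP : PChain P) {ι : Type*} (H : Finset ι)
    (f : ι → R[X]) (g : ι → R'[X]) (hm : ∀ i ∈ H, Match P (f i) (g i)) :
    ∃ P' : Finset (R × R'), P' ⊆ P ∧ PChain P' ∧ (∀ i ∈ H, Match P' (f i) (g i)) ∧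
      ∀ n ∈ P', ∃ i ∈ H, f i ≠ 0 ∧ (f i).eval n.1 = 0 := by
  classical
  refine ⟨P.filter (fun n => ∃ i ∈ H, f i ≠ 0 ∧ (f i).eval n.1 = 0), Finset.filter_subset _ _,
    ?_, ?_, ?_⟩
  · intro q hq r hr
    exact hP q (Finset.mem_of_mem_filter q hq) r (Finset.mem_of_mem_filter r hr)
  · intro i hi x x' hc
    obtain ⟨y', hy⟩ := hP.exists_cell x
    rw [hm i hi x y' hy]
    by_contra hne
    have hg0 : g i ≠ 0 := by
      intro h0
      rw [h0] at hne
      simp at hne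
    have hf0 : f i ≠ 0 := fun h0 => hg0 ((hm i hi).eq_zero hP h0)
    have key : ∀ z', (g i).eval z' = 0 → (y' < z' ↔ x' < z') ∧ (z' < y' ↔ z' < x') := by
      intro z' hz
      by_contra hcon
      refine (hm i hi).swap.ne_zero hP.swap hg0 z' (fun n hn hnc => hcon ?_) hz
      rw [mem_swapF] at hn
      subst hnc
      have h1 := hy _ hn
      have h2 := hc (n.2, n.1) (Finset.mem_filter.mpr ⟨hn, i, hi, hf0, by
        have := hm i hi _ _ (hP.cell hn)
        simp only [hz, sign_zero] at this
        exact sign_eq_zero_iff.mp this⟩)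
      exact ⟨h1.1.symm.trans h2.1, h1.2.symm.trans h2.2⟩
    rcases lt_trichotomy y' x' with hlt | heq | hgt
    · obtain ⟨c, h1, h2, h3⟩ := hR'.root_of_sign (g i) y' x' hlt hne
      have := key c h3
      rcases h1.eq_or_lt with rfl | h1
      · exact absurd (this.2.mpr hlt) (lt_irrefl _)
      · exact absurd (this.1.mp h1) h2.not_gt
    · rw [heq] at hne; exact hne rfl
    · obtain ⟨c, h1, h2, h3⟩ := hR'.root_of_sign (g i) x' y' hgt (fun h => hne h.symm)
      have := key c h3
      rcases h1.eq_or_lt with rfl | h1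
      · exact absurd (this.2.mp hgt) (lt_irrefl _)
      · exact absurd (this.1.mpr h1) h2.not_gt
  · intro n hn
    exact (Finset.mem_filter.mp hn).2

end prune

section prem
variable {B : Type*} [CommRing B]

theorem prem_aux (p : B[X]) (k : ℕ) (hk : 1 ≤ k) (hp : p.natDegree ≤ k) : ∀ (n : ℕ) (f : B[X]),
    f.natDegree ≤ n → ∃ (e : ℕ) (q r : B[X]), C (p.coeff k) ^ e * f = q * p + r ∧
      r.natDegree < k := by
  intro n
  induction n with
  | zero =>
    intro f hf
    exact ⟨0, 0, f, by simp, by omega⟩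
  | succ n ih =>
    intro f hf
    by_cases hlt : f.natDegree < k
    · exact ⟨0, 0, f, by simp, hlt⟩
    by_cases hn : f.natDegree ≤ n
    · exact ih f hn
    have hfn : f.natDegree = n + 1 := by omega
    have hkn : k ≤ n + 1 := by omega
    set f1 : B[X] := C (p.coeff k) * f - C (f.coeff (n + 1)) * X ^ (n + 1 - k) * p with hf1
    have h1 : f1.natDegree ≤ n := by
      rw [natDegree_le_iff_coeff_eq_zero]
      intro N hN
      rw [hf1, coeff_sub, coeff_C_mul, mul_assoc, coeff_C_mul, coeff_X_pow_mul',
        if_pos (by omega)]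
      rcases (show N = n + 1 ∨ n + 1 < N by omega) with rfl | hN
      · rw [show n + 1 - (n + 1 - k) = k by omega]; ring
      · rw [coeff_eq_zero_of_natDegree_lt (p := f) (by omega),
          coeff_eq_zero_of_natDegree_lt (p := p) (n := N - (n + 1 - k)) (by omega)]; ring
    obtain ⟨e, q, r, h2, h3⟩ := ih f1 h1
    refine ⟨e + 1, q + C (p.coeff k) ^ e * (C (f.coeff (n + 1)) * X ^ (n + 1 - k)), r, ?_, h3⟩
    rw [hf1] at h2
    linear_combination h2

theorem prem (p : B[X]) (k : ℕ) (hk : 1 ≤ k) (hp : p.natDegree ≤ k) (f : B[X]) :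
    ∃ (e : ℕ) (q r : B[X]), C (p.coeff k) ^ (2 * e) * f = q * p + r ∧ r.natDegree < k := by
  obtain ⟨e, q, r, h1, h2⟩ := prem_aux p k hk hp _ f le_rfl
  refine ⟨e, C (p.coeff k) ^ e * q, C (p.coeff k) ^ e * r, ?_, ?_⟩
  · linear_combination C (p.coeff k) ^ e * h1
  · rw [← C_pow]
    exact (natDegree_C_mul_le _ _).trans_lt h2

noncomputable def ptrunc (h : B[X]) (k : ℕ) : B[X] :=
  ∑ i ∈ Finset.range (k + 1), monomial i (h.coeff i)

theorem coeff_ptrunc (h : B[X]) (k i : ℕ) :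
    (ptrunc h k).coeff i = if i ≤ k then h.coeff i else 0 := by
  simp [ptrunc, finsetSum_coeff, coeff_monomial, Nat.lt_succ_iff]

theorem exists_rem (f h : B[X]) (k : ℕ) : ∃ r : B[X], r.natDegree ≤ k - 1 ∧
    (1 ≤ k → ∃ e q, C (h.coeff k) ^ (2 * e) * f = q * ptrunc h k + r) := by
  by_cases hk : 1 ≤ k
  · obtain ⟨e, q, r, h1, h2⟩ := prem (ptrunc h k) k hk (by
      rw [natDegree_le_iff_coeff_eq_zero]
      intro N hN
      rw [coeff_ptrunc, if_neg (by omega)]) f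
    refine ⟨r, by omega, fun _ => ⟨e, q, ?_⟩⟩
    rw [coeff_ptrunc, if_pos le_rfl] at h1
    exact h1
  · exact ⟨0, by simp, fun h => absurd h hk⟩

theorem sign_rem {R : Type*} [Field R] [LinearOrder R] [IsStrictOrderedRing R] (φ : B →+* R)
    (f h r q : B[X]) (k e : ℕ) (heq : C (h.coeff k) ^ (2 * e) * f = q * ptrunc h k + r)
    (hc : φ (h.coeff k) ≠ 0) (hhi : ∀ i, k < i → φ (h.coeff i) = 0) (x : R)
    (hx : (h.map φ).eval x = 0) :
    SignType.sign ((f.map φ).eval x) = SignType.sign ((r.map φ).eval x) := by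
  have h1 : (ptrunc h k).map φ = h.map φ := by
    ext i
    rw [coeff_map, coeff_map, coeff_ptrunc]
    split_ifs with hi
    · rfl
    · rw [hhi i (by omega), map_zero]
  have h2 := congrArg (fun p => (p.map φ).eval x) heq
  simp only [Polynomial.map_mul, Polynomial.map_pow, Polynomial.map_add, h1, eval_mul, eval_pow,
    eval_add, hx, mul_zero, zero_add, map_C, eval_C] at h2
  rw [← h2, sign_mul, sign_pos (a := φ (h.coeff k) ^ (2 * e)) (by
    rw [pow_mul]; positivity), one_mul]

end prem

section good
variable {R R' : Type*} [Field R] [LinearOrder R] [IsStrictOrderedRing R]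
  [Field R'] [LinearOrder R'] [IsStrictOrderedRing R'] {B : Type*} [CommRing B]

variable (R R') in
def Good (F : Finset B[X]) (G : Finset B) : Prop :=
  ∀ (φ : B →+* R) (ψ : B →+* R'), (∀ b ∈ G, SignType.sign (φ b) = SignType.sign (ψ b)) →
    ∃ P : Finset (R × R'), PChain P ∧ ∀ p ∈ F, Match P (p.map φ) (p.map ψ)

theorem sign_zero_iff_of_eq {a : R} {b : R'} (h : SignType.sign a = SignType.sign b) :
    a = 0 ↔ b = 0 := by
  rw [← sign_eq_zero_iff, h, sign_eq_zero_iff]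

theorem good_step (hR : IVP R) (hR' : IVP R') (d : ℕ)
    (ih : ∀ F : Finset B[X], (∀ p ∈ F, p.natDegree ≤ d) → ∃ G, Good R R' F G) :
    ∀ E : Finset B[X], (∀ p ∈ E, p.natDegree ≤ d + 1) →
    ∀ F : Finset B[X], (∀ p ∈ F, p.natDegree ≤ d) → ∃ G : Finset B, ∀ (φ : B →+* R) (ψ : B →+* R'),
      (∀ b ∈ G, SignType.sign (φ b) = SignType.sign (ψ b)) →
      ∃ P : Finset (R × R'), PChain P ∧ (∀ p ∈ E, Match P (p.map φ) (p.map ψ)) ∧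
        ∀ p ∈ F, Match P (p.map φ) (p.map ψ) := by
  classical
  intro E
  induction E using Finset.induction_on with
  | empty =>
    intro _ F hF
    obtain ⟨G, hG⟩ := ih F hF
    refine ⟨G, fun φ ψ hs => ?_⟩
    obtain ⟨P, h1, h2⟩ := hG φ ψ hs
    exact ⟨P, h1, by simp, h2⟩
  | insert f E' _ ihE =>
    intro hE F hF
    have hfd : f.natDegree ≤ d + 1 := hE f (Finset.mem_insert_self _ _)
    have hE' : ∀ p ∈ E', p.natDegree ≤ d + 1 := fun p hp => hE p (Finset.mem_insert_of_mem hp)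
    choose rem hrem1 hrem2 using fun (h : B[X]) (k : ℕ) => exists_rem f h k
    have hder : (derivative f).natDegree ≤ d := (natDegree_derivative_le f).trans (by omega)
    have hera : (f.erase (d + 1)).natDegree ≤ d := by
      rw [natDegree_le_iff_coeff_eq_zero]
      intro N hN
      rw [coeff_erase]
      split_ifs with h
      · rfl
      · exact coeff_eq_zero_of_natDegree_lt (by omega)
    set H : Finset B[X] := E' ∪ (F ∪ {derivative f, f.erase (d + 1)}) with hH
    have hHd : ∀ p ∈ H, p.natDegree ≤ d + 1 := by
      intro p hp
      simp only [hH, Finset.mem_union, Finset.mem_insert, Finset.mem_singleton] at hp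
      rcases hp with hp | hp | rfl | rfl
      · exact hE' p hp
      · exact (hF p hp).trans (Nat.le_succ d)
      · omega
      · omega
    obtain ⟨G, hG⟩ := ihE hE' ((F ∪ {derivative f, f.erase (d + 1)}) ∪
      (H ×ˢ Finset.range (d + 2)).image (fun z => rem z.1 z.2)) (by
        intro p hp
        simp only [Finset.mem_union, Finset.mem_insert, Finset.mem_singleton, Finset.mem_image,
          Finset.mem_product, Finset.mem_range] at hp
        rcases hp with (hp | rfl | rfl) | ⟨z, ⟨_, hz⟩, rfl⟩
        · exact hF p hp
        · exact hder
        · exact hera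
        · exact (hrem1 z.1 z.2).trans (by omega))
    refine ⟨G ∪ (insert f H ×ˢ Finset.range (d + 2)).image (fun z => z.1.coeff z.2),
      fun φ ψ hs => ?_⟩
    obtain ⟨P, hP, hPE, hPF⟩ := hG φ ψ (fun b hb => hs b (Finset.mem_union_left _ hb))
    have hcoef : ∀ h ∈ insert f H, ∀ i,
        SignType.sign (φ (h.coeff i)) = SignType.sign (ψ (h.coeff i)) := by
      intro h hh i
      by_cases hi : i < d + 2
      · exact hs _ (Finset.mem_union_right _ (Finset.mem_image.mpr ⟨(h, i),
          Finset.mem_product.mpr ⟨hh, Finset.mem_range.mpr hi⟩, rfl⟩))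
      · have : h.natDegree ≤ d + 1 := by
          rcases Finset.mem_insert.mp hh with rfl | hh
          · exact hfd
          · exact hHd h hh
        rw [coeff_eq_zero_of_natDegree_lt (by omega)]
        simp
    have hPH : ∀ h ∈ H, Match P (h.map φ) (h.map ψ) := by
      intro h hh
      rcases Finset.mem_union.mp hh with hh | hh
      · exact hPE h hh
      · exact hPF h (Finset.mem_union_left _ hh)
    have hPR : ∀ h ∈ H, ∀ k, k ≤ d + 1 → Match P ((rem h k).map φ) ((rem h k).map ψ) := by
      intro h hh k hk
      exact hPF _ (Finset.mem_union_right _ (Finset.mem_image.mpr ⟨(h, k),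
          Finset.mem_product.mpr ⟨hh, Finset.mem_range.mpr (by omega)⟩, rfl⟩))
    have hdH : derivative f ∈ H := by simp [hH]
    have heH : f.erase (d + 1) ∈ H := by simp [hH]
    have hFH : ∀ p ∈ F, p ∈ H := fun p hp => by simp [hH, hp]
    have hEH : ∀ p ∈ E', p ∈ H := fun p hp => by simp [hH, hp]
    have hcf := hcoef f (Finset.mem_insert_self _ _) (d + 1)
    by_cases hc0 : φ (f.coeff (d + 1)) = 0
    · have hc0' := (sign_zero_iff_of_eq hcf).mp hc0
      have e1 : f.map φ = (f.erase (d + 1)).map φ := by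
        ext i
        rw [coeff_map, coeff_map, coeff_erase]
        split_ifs with h
        · rw [h, hc0, map_zero]
        · rfl
      have e2 : f.map ψ = (f.erase (d + 1)).map ψ := by
        ext i
        rw [coeff_map, coeff_map, coeff_erase]
        split_ifs with h
        · rw [h, hc0', map_zero]
        · rfl
      refine ⟨P, hP, ?_, fun p hp => hPH p (hFH p hp)⟩
      intro p hp
      rcases Finset.mem_insert.mp hp with rfl | hp
      · rw [e1, e2]; exact hPH _ heH
      · exact hPE p hp
    · have hc0' : ψ (f.coeff (d + 1)) ≠ 0 := fun h => hc0 ((sign_zero_iff_of_eq hcf).mpr h)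
      have hnd : (f.map φ).natDegree = d + 1 :=
        le_antisymm (natDegree_map_le.trans hfd) (le_natDegree_of_ne_zero (by rwa [coeff_map]))
      have hnd' : (f.map ψ).natDegree = d + 1 :=
        le_antisymm (natDegree_map_le.trans hfd) (le_natDegree_of_ne_zero (by rwa [coeff_map]))
      obtain ⟨P1, hsub, hP1, hm1, hn1⟩ :=
        prune hR' hP H (fun h => h.map φ) (fun h => h.map ψ) hPH
      have hnode : ∀ n ∈ P1, SignType.sign ((f.map φ).eval n.1) =
          SignType.sign ((f.map ψ).eval n.2) := by
        intro n hn
        obtain ⟨h, hh, h0, hx⟩ := hn1 n hn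
        have hx' : (h.map ψ).eval n.2 = 0 :=
          (sign_zero_iff_of_eq (hPH h hh _ _ (hP.cell (hsub hn)))).mp hx
        have hch := hcoef h (Finset.mem_insert_of_mem hh)
        set k := (h.map φ).natDegree with hk
        have hkd : k ≤ d + 1 := natDegree_map_le.trans (hHd h hh)
        have hk1 : 1 ≤ k := by
          by_contra hcon
          have h1 := eq_C_of_natDegree_eq_zero (p := h.map φ) (by omega)
          rw [h1, eval_C] at hx
          rw [hx, map_zero] at h1
          exact h0 h1
        have hck : φ (h.coeff k) ≠ 0 := by
          rw [← coeff_map, hk]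
          exact leadingCoeff_ne_zero.mpr h0
        have hhi : ∀ i, k < i → φ (h.coeff i) = 0 := by
          intro i hi
          rw [← coeff_map]
          exact coeff_eq_zero_of_natDegree_lt hi
        obtain ⟨e, q, heq⟩ := hrem2 h k hk1
        rw [sign_rem φ f h _ q k e heq hck hhi n.1 hx,
          sign_rem ψ f h _ q k e heq (fun h0 => hck ((sign_zero_iff_of_eq (hch k)).mpr h0))
            (fun i hi => (sign_zero_iff_of_eq (hch i)).mp (hhi i hi)) n.2 hx']
        exact hPR h hh k hkd _ _ (hP.cell (hsub hn))
      obtain ⟨P2, hsub2, hP2, hm2⟩ := step hR hR' hP1 (f := f.map φ) (g := f.map ψ)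
        (by rw [derivative_map, derivative_map]; exact hm1 _ hdH)
        (fun h => by have := natDegree_eq_zero_of_derivative_eq_zero h; omega)
        (fun h => by have := natDegree_eq_zero_of_derivative_eq_zero h; omega)
        hnode (by rw [hnd, hnd'])
        (by rw [leadingCoeff, leadingCoeff, hnd, hnd', coeff_map, coeff_map]; exact hcf)
      refine ⟨P2, hP2, ?_, fun p hp => (hm1 p (hFH p hp)).mono hsub2⟩
      intro p hp
      rcases Finset.mem_insert.mp hp with rfl | hp
      · exact hm2
      · exact (hm1 p (hEH p hp)).mono hsub2

theorem good_all (hR : IVP R) (hR' : IVP R') : ∀ (d : ℕ) (F : Finset B[X]),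
    (∀ p ∈ F, p.natDegree ≤ d) → ∃ G, Good R R' F G := by
  classical
  intro d
  induction d with
  | zero =>
    intro F hF
    refine ⟨F.image (fun p => p.coeff 0), fun φ ψ hs => ⟨∅, by simp [PChain], ?_⟩⟩
    intro p hp x x' _
    have := hs _ (Finset.mem_image_of_mem _ hp)
    rw [eq_C_of_natDegree_le_zero (hF p hp)]
    simpa using this
  | succ d ih =>
    intro F hF
    obtain ⟨G, hG⟩ := good_step hR hR' d ih F hF ∅ (by simp)
    refine ⟨G, fun φ ψ hs => ?_⟩
    obtain ⟨P, h1, h2, _⟩ := hG φ ψ hs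
    exact ⟨P, h1, h2⟩

theorem good_exists (hR : IVP R) (hR' : IVP R') (F : Finset B[X]) : ∃ G, Good R R' F G :=
  good_all hR hR' (F.sup natDegree) F (fun _ hp => Finset.le_sup hp)

variable (R R') in
/-- sign-preserving transfer of points -/
def Transfer (B : Type*) [CommRing B] : Prop :=
  ∀ (F : Finset B) (φ : B →+* R), ∃ ψ : B →+* R',
    ∀ b ∈ F, SignType.sign (φ b) = SignType.sign (ψ b)

theorem Transfer.poly (hR : IVP R) (hR' : IVP R') (h : Transfer R R' B) :
    Transfer R R' B[X] := by
  intro F φ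
  obtain ⟨G, hG⟩ := good_exists hR hR' F
  obtain ⟨ψ, hψ⟩ := h G (φ.comp C)
  obtain ⟨P, hP, hm⟩ := hG _ _ hψ
  obtain ⟨x', hx'⟩ := hP.exists_cell (φ X)
  refine ⟨eval₂RingHom ψ x', fun p hp => ?_⟩
  have := hm p hp _ _ hx'
  have e : φ = eval₂RingHom (φ.comp C) (φ X) := by
    apply Polynomial.ringHom_ext <;> simp
  rw [e, coe_eval₂RingHom, coe_eval₂RingHom, ← eval_map, ← eval_map]
  exact this

theorem Transfer.of_surj {B' : Type*} [CommRing B'] [IsNoetherianRing B] (h : Transfer R R' B)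
    (π : B →+* B') (hπ : Function.Surjective π) : Transfer R R' B' := by
  classical
  intro F φ
  obtain ⟨S, hS⟩ := (isNoetherianRing_iff_ideal_fg B).mp inferInstance (RingHom.ker π)
  choose g hg using hπ
  obtain ⟨ψ, hψ⟩ := h (S ∪ F.image g) (φ.comp π)
  have hker : ∀ a, a ∈ RingHom.ker π → ψ a = 0 := by
    intro a ha
    have : RingHom.ker π ≤ RingHom.ker ψ := by
      rw [← hS, Ideal.span_le]
      intro s hs
      have h1 := hψ s (Finset.mem_union_left _ hs)
      have h2 : π s = 0 := by
        have : s ∈ RingHom.ker π := hS ▸ Ideal.subset_span hs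
        exact this
      rw [RingHom.comp_apply, h2, map_zero] at h1
      exact (sign_zero_iff_of_eq h1).mp rfl
    exact this ha
  refine ⟨RingHom.liftOfRightInverse π g hg ⟨ψ, hker⟩, fun b hb => ?_⟩
  have h1 := hψ (g b) (Finset.mem_union_right _ (Finset.mem_image_of_mem _ hb))
  rw [RingHom.comp_apply, hg] at h1
  rw [h1]
  congr 1

end good

theorem ivp_real : IVP ℝ := by
  intro p a b hab h
  have hc : ContinuousOn (fun x => p.eval x) (Set.Icc a b) := p.continuous.continuousOn
  rcases mul_neg_iff.mp h with ⟨h1, h2⟩ | ⟨h1, h2⟩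
  · obtain ⟨c, hc1, hc2⟩ := intermediate_value_Ioo' hab.le hc ⟨h2, h1⟩
    exact ⟨c, hc1.1, hc1.2, hc2⟩
  · obtain ⟨c, hc1, hc2⟩ := intermediate_value_Ioo hab.le hc ⟨h1, h2⟩
    exact ⟨c, hc1.1, hc1.2, hc2⟩

theorem transfer_real {R : Type*} [Field R] [LinearOrder R] [IsStrictOrderedRing R] :
    Transfer R ℝ ℝ := by
  intro F φ
  refine ⟨RingHom.id ℝ, fun b _ => ?_⟩
  have hpos : ∀ x : ℝ, 0 < x → 0 < φ x := by
    intro x hx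
    rw [← Real.sq_sqrt hx.le, map_pow]
    have : φ (Real.sqrt x) ≠ 0 := by
      rw [_root_.map_ne_zero]
      exact (Real.sqrt_pos.mpr hx).ne'
    positivity
  rcases lt_trichotomy b 0 with h | h | h
  · have := hpos (-b) (by linarith)
    rw [map_neg] at this
    rw [RingHom.id_apply, sign_neg h, sign_neg (by linarith)]
  · simp [h]
  · rw [RingHom.id_apply, sign_pos h, sign_pos (hpos b h)]

theorem transfer_mv {R : Type*} [Field R] [LinearOrder R] [IsStrictOrderedRing R] (hR : IVP R)
    (n : ℕ) : Transfer R ℝ (MvPolynomial (Fin n) ℝ) := by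
  induction n with
  | zero =>
    exact transfer_real.of_surj (MvPolynomial.isEmptyRingEquiv ℝ (Fin 0)).symm.toRingHom
      (MvPolynomial.isEmptyRingEquiv ℝ (Fin 0)).symm.surjective
  | succ n ih =>
    exact (ih.poly hR ivp_real).of_surj
      (MvPolynomial.finSuccEquiv ℝ n).symm.toRingEquiv.toRingHom
      (MvPolynomial.finSuccEquiv ℝ n).symm.surjective

theorem transfer_ft {R : Type*} [Field R] [LinearOrder R] [IsStrictOrderedRing R] (hR : IVP R)
    {A : Type*} [CommRing A] [Algebra ℝ A] (hA : Algebra.FiniteType ℝ A) : Transfer R ℝ A := by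
  obtain ⟨n, f, hf⟩ := Algebra.FiniteType.iff_quotient_mvPolynomial''.mp hA
  exact (transfer_mv hR n).of_surj f.toRingHom hf

/-- Positivstellensatz (Krivine–Stengle), existence form. -/
theorem pss {A : Type*} [CommRing A] [Algebra ℝ A] (hA : Algebra.FiniteType ℝ A)
    (S : Set A) (hS : S.Finite) (h : ¬ IsInPreordering S (-1)) : ∃ χ, χ ∈ KSet S := by
  classical
  have hT : PreO {a | IsInPreordering S a} :=
    { add := fun ha hb => IsInPreordering.add ha hb
      mul := fun ha hb => IsInPreordering.mul ha hb
      sq := fun a => IsInPreordering.sq a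
      neg_one := h }
  obtain ⟨R, _, _, _, θ, hR, hθ⟩ := hT.exists_hom
  obtain ⟨ψ, hψ⟩ := transfer_ft hR hA hS.toFinset θ
  have hgen : ∀ s ∈ S, 0 ≤ ψ s := by
    intro s hs
    have h1 := hψ s (hS.mem_toFinset.mpr hs)
    have h2 := hθ s (IsInPreordering.gen hs)
    rw [← sign_nonneg_iff] at h2 ⊢
    rwa [← h1]
  refine ⟨⟨ψ, fun r => ?_⟩, ?_⟩
  · exact RingHom.congr_fun (Subsingleton.elim (ψ.comp (algebraMap ℝ A)) (RingHom.id ℝ)) r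
  · intro a ha
    change 0 ≤ ψ a
    induction ha with
    | sq a => rw [map_pow]; positivity
    | gen hs => exact hgen _ hs
    | add _ _ h1 h2 => rw [map_add]; positivity
    | mul _ _ h1 h2 => rw [map_mul]; positivity

end Part5

section Part6

section bounded
variable {A : Type*} [CommRing A] [Algebra ℝ A]

theorem IsInPreordering.zero (S : Set A) : IsInPreordering S 0 := by
  simpa using IsInPreordering.sq (S := S) (0 : A)

theorem IsInPreordering.one (S : Set A) : IsInPreordering S 1 := by
  simpa using IsInPreordering.sq (S := S) (1 : A)

theorem IsInPreordering.mono {S S' : Set A} (h : S ⊆ S') {a : A} (ha : IsInPreordering S a) :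
    IsInPreordering S' a := by
  induction ha with
  | sq a => exact .sq a
  | gen hs => exact .gen (h hs)
  | add _ _ h1 h2 => exact h1.add h2
  | mul _ _ h1 h2 => exact h1.mul h2

theorem preord_insert (S : Set A) (g : A) {a : A} (ha : IsInPreordering (insert g S) a) :
    ∃ t0 t1, IsInPreordering S t0 ∧ IsInPreordering S t1 ∧ a = t0 + g * t1 := by
  induction ha with
  | sq a => exact ⟨a ^ 2, 0, .sq a, .zero S, by simp⟩
  | gen hs =>
    rcases hs with rfl | hs
    · exact ⟨0, 1, .zero S, .one S, by simp⟩
    · exact ⟨_, 0, .gen hs, .zero S, by simp⟩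
  | add _ _ h1 h2 =>
    obtain ⟨t0, t1, a1, a2, rfl⟩ := h1
    obtain ⟨s0, s1, b1, b2, rfl⟩ := h2
    exact ⟨t0 + s0, t1 + s1, a1.add b1, a2.add b2, by ring⟩
  | mul _ _ h1 h2 =>
    obtain ⟨t0, t1, a1, a2, rfl⟩ := h1
    obtain ⟨s0, s1, b1, b2, rfl⟩ := h2
    exact ⟨t0 * s0 + g ^ 2 * (t1 * s1), t0 * s1 + t1 * s0,
      (a1.mul b1).add ((IsInPreordering.sq g).mul (a2.mul b2)),
      (a1.mul b2).add (a2.mul b1), by ring⟩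

theorem pss_strict (hA : Algebra.FiniteType ℝ A) (S : Set A) (hS : S.Finite) (g : A)
    (hg : ∀ χ ∈ KSet S, 0 < χ g) :
    ∃ p q, IsInPreordering S p ∧ IsInPreordering S q ∧ g * p = 1 + q := by
  have h : IsInPreordering (insert (-g) S) (-1) := by
    by_contra hcon
    obtain ⟨χ, hχ⟩ := pss hA _ (hS.insert _) hcon
    have h1 := hg χ (fun a ha => hχ a (ha.mono (Set.subset_insert _ _)))
    have h2 := hχ (-g) (.gen (Set.mem_insert _ _))
    rw [map_neg] at h2
    linarith
  obtain ⟨t0, t1, h0, h1, h2⟩ := preord_insert S (-g) h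
  exact ⟨t1, t0, h1, h0, by linear_combination h2⟩

theorem cauchy_schwarz (L : A →ₗ[ℝ] ℝ) (hL : ∀ a, 0 ≤ L (a ^ 2)) (u v : A) :
    L (u * v) ^ 2 ≤ L (u ^ 2) * L (v ^ 2) := by
  have h : ∀ x : ℝ, 0 ≤ L (u ^ 2) * (x * x) + 2 * L (u * v) * x + L (v ^ 2) := by
    intro x
    have := hL (x • u + v)
    have e : (x • u + v) ^ 2 = (x * x) • u ^ 2 + (2 * x) • (u * v) + v ^ 2 := by
      simp only [Algebra.smul_def, map_mul, map_ofNat]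
      ring
    rw [e, map_add, map_add, map_smul, map_smul, smul_eq_mul, smul_eq_mul] at this
    linarith
  have := discrim_le_zero h
  rw [discrim] at this
  nlinarith

theorem seq_bound (s : ℕ → ℝ) (hpos : ∀ n, 0 ≤ s n) (hcs : ∀ n, s (n + 1) ^ 2 ≤ s n * s (n + 2))
    (N C : ℝ) (hN : 0 < N) (hb : ∀ n, s n ≤ C * N ^ n) : s 1 ≤ N * s 0 := by
  by_contra hcon
  push Not at hcon
  rcases (hpos 0).eq_or_lt with h0 | h0
  · have := hcs 0
    simp only [← h0, zero_add, zero_mul, mul_zero] at this hcon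
    nlinarith
  set ρ := s 1 / s 0 with hρ
  have hρN : N < ρ := by rw [hρ, lt_div_iff₀ h0]; exact hcon
  have hρ0 : 0 < ρ := hN.trans hρN
  have key : ∀ n, 0 < s n ∧ ρ * s n ≤ s (n + 1) := by
    intro n
    induction n with
    | zero => exact ⟨h0, by rw [hρ, div_mul_cancel₀ _ h0.ne']⟩
    | succ n ih =>
      have h1 : 0 < s (n + 1) := (mul_pos hρ0 ih.1).trans_le ih.2
      refine ⟨h1, ?_⟩
      have h2 := hcs n
      have h3 : ρ * s (n + 1) * s n ≤ s (n + 1 + 1) * s n := by nlinarith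
      exact le_of_mul_le_mul_right h3 ih.1
  have key2 : ∀ n, s 0 * ρ ^ n ≤ s n := by
    intro n
    induction n with
    | zero => simp
    | succ n ih =>
      have := (key n).2
      rw [pow_succ]
      nlinarith
  have hgt : 1 < ρ / N := by rw [lt_div_iff₀ hN]; linarith
  obtain ⟨n, hn⟩ := pow_unbounded_of_one_lt (C / s 0) hgt
  rw [div_lt_iff₀ h0, div_pow, div_mul_eq_mul_div, lt_div_iff₀ (by positivity)] at hn
  have := (key2 n).trans (hb n)
  linarith

theorem bounded_sq (hA : Algebra.FiniteType ℝ A) (S : Set A) (hS : S.Finite) (b : A) (N : ℝ)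
    (hN : 0 < N) (hb : ∀ χ ∈ KSet S, χ b ^ 2 < N) (L : A →ₗ[ℝ] ℝ)
    (hL : ∀ a, IsInPreordering S a → 0 ≤ L a) : L (b ^ 2) ≤ N * L 1 := by
  obtain ⟨p, q, hp, hq, hpq⟩ := pss_strict hA S hS (algebraMap ℝ A N - b ^ 2) (by
    intro χ hχ
    have := hb χ hχ
    rw [map_sub, map_pow, AlgHom.commutes]
    simpa using this)
  have hsq : ∀ n, IsInPreordering S ((b ^ n) ^ 2) := fun n => .sq _
  have h1 : ∀ n, L ((b ^ n) ^ 2) + L ((b ^ (n + 1)) ^ 2 * p) ≤ N * L ((b ^ n) ^ 2 * p) := by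
    intro n
    have h2 := hL _ ((hsq n).mul hq)
    have e : N • ((b ^ n) ^ 2 * p) = (b ^ n) ^ 2 + (b ^ (n + 1)) ^ 2 * p + (b ^ n) ^ 2 * q := by
      rw [Algebra.smul_def]
      linear_combination (b ^ n) ^ 2 * hpq
    have := congrArg L e
    rw [map_smul, map_add, map_add, smul_eq_mul] at this
    linarith
  have h2 : ∀ n, L ((b ^ n) ^ 2 * p) ≤ N ^ n * L p := by
    intro n
    induction n with
    | zero => simp
    | succ n ih =>
      have := h1 n
      have := hL _ (hsq n)
      rw [pow_succ N n]
      have := mul_le_mul_of_nonneg_left ih hN.le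
      linarith
  have := seq_bound (fun n => L ((b ^ n) ^ 2)) (fun n => hL _ (hsq n)) (fun n => by
      have := cauchy_schwarz L (fun a => hL _ (.sq a)) (b ^ n) (b ^ (n + 2))
      rwa [show b ^ n * b ^ (n + 2) = (b ^ (n + 1)) ^ 2 by ring] at this) N (N * L p) hN (by
      intro n
      have a1 := h1 n
      have a2 := h2 n
      have a3 := hL _ ((hsq (n + 1)).mul hp)
      nlinarith)
  simpa using this

theorem bounded_mul (hA : Algebra.FiniteType ℝ A) (S : Set A) (hS : S.Finite) (c : A)
    (hc : ∀ χ ∈ KSet S, |χ c| ≤ 1) (L : A →ₗ[ℝ] ℝ)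
    (hL : ∀ a, IsInPreordering S a → 0 ≤ L a) (t : A) (ht : IsInPreordering S t) :
    |L (t * c)| ≤ L t := by
  set Lt : A →ₗ[ℝ] ℝ := L.comp (LinearMap.mulLeft ℝ t) with hLt
  have hLt' : ∀ a, Lt a = L (t * a) := fun a => rfl
  have hpos : ∀ a, IsInPreordering S a → 0 ≤ Lt a := fun a ha => hL _ (ht.mul ha)
  have h1 : ∀ N : ℝ, 1 < N → Lt (c ^ 2) ≤ N * Lt 1 := fun N hN =>
    bounded_sq hA S hS c N (by linarith) (fun χ hχ => by
      have := hc χ hχ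
      rw [← sq_abs]
      have h0 := abs_nonneg (χ c)
      nlinarith) Lt hpos
  have h2 : Lt (c ^ 2) ≤ Lt 1 := by
    refine le_of_forall_pos_le_add fun ε hε => ?_
    have h0 := hpos 1 (.one S)
    have hN : (1:ℝ) < 1 + ε / (Lt 1 + 1) := by
      have : 0 < ε / (Lt 1 + 1) := by positivity
      linarith
    have h3 := h1 _ hN
    have h4 : ε / (Lt 1 + 1) * Lt 1 ≤ ε := by
      rw [div_mul_eq_mul_div, div_le_iff₀ (by linarith)]
      nlinarith
    linarith
  have h3 := cauchy_schwarz Lt (fun a => hpos _ (.sq a)) 1 c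
  rw [one_pow, one_mul] at h3
  have h0 := hpos 1 (.one S)
  have h4 : Lt c ^ 2 ≤ Lt 1 ^ 2 := by nlinarith
  have h5 := abs_le_of_sq_le_sq h4 h0
  rw [hLt', hLt', mul_one] at h5
  exact h5

end bounded

end Part6

section Part7

section caps
variable {A : Type*} [CommRing A] [Algebra ℝ A] {ι : Type*}

/-- A cap of the cone of `T`-positive functionals. -/
def fcap (S : Set A) (a : ι → A) (c : ι → ℝ) : Set (A → ℝ) :=
  {l | (∀ x y, l (x + y) = l x + l y) ∧ (∀ (r : ℝ) x, l (r • x) = r * l x) ∧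
    (∀ x, IsInPreordering S x → 0 ≤ l x) ∧ ∀ s : Finset ι, ∑ i ∈ s, c i * l (a i ^ 2) ≤ 1}

theorem mem_fcap (S : Set A) (a : ι → A) (c : ι → ℝ) (L : A →ₗ[ℝ] ℝ) :
    (L : A → ℝ) ∈ fcap S a c ↔ (∀ x, IsInPreordering S x → 0 ≤ L x) ∧
      ∀ s : Finset ι, ∑ i ∈ s, c i * L (a i ^ 2) ≤ 1 := by
  simp [fcap]

theorem exists_lin_of_mem_fcap {S : Set A} {a : ι → A} {c : ι → ℝ} {l : A → ℝ}
    (h : l ∈ fcap S a c) : ∃ L : A →ₗ[ℝ] ℝ, (L : A → ℝ) = l :=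
  ⟨{ toFun := l, map_add' := h.1, map_smul' := fun r x => by simp [h.2.1 r x] }, rfl⟩

theorem fcap_convex (S : Set A) (a : ι → A) (c : ι → ℝ) : Convex ℝ (fcap S a c) := by
  intro l hl l' hl' α β hα hβ hαβ
  refine ⟨fun x y => ?_, fun r x => ?_, fun x hx => ?_, fun s => ?_⟩
  · simp only [Pi.add_apply, Pi.smul_apply, smul_eq_mul, hl.1, hl'.1]; ring
  · simp only [Pi.add_apply, Pi.smul_apply, smul_eq_mul, hl.2.1, hl'.2.1]; ring
  · have := hl.2.2.1 x hx
    have := hl'.2.2.1 x hx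
    simp only [Pi.add_apply, Pi.smul_apply, smul_eq_mul]
    positivity
  · have h1 := hl.2.2.2 s
    have h2 := hl'.2.2.2 s
    have : ∑ i ∈ s, c i * (α • l + β • l') (a i ^ 2) =
        α * ∑ i ∈ s, c i * l (a i ^ 2) + β * ∑ i ∈ s, c i * l' (a i ^ 2) := by
      rw [Finset.mul_sum, Finset.mul_sum, ← Finset.sum_add_distrib]
      refine Finset.sum_congr rfl fun i _ => ?_
      simp only [Pi.add_apply, Pi.smul_apply, smul_eq_mul]; ring
    rw [this]
    nlinarith

theorem fcap_closed (S : Set A) (a : ι → A) (c : ι → ℝ) : IsClosed (fcap S a c) := by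
  simp only [fcap, Set.setOf_and, Set.setOf_forall]
  refine IsClosed.inter ?_ (IsClosed.inter ?_ (IsClosed.inter ?_ ?_))
  · exact isClosed_iInter fun x => isClosed_iInter fun y => isClosed_eq (by fun_prop) (by fun_prop)
  · exact isClosed_iInter fun x => isClosed_iInter fun y => isClosed_eq (by fun_prop) (by fun_prop)
  · exact isClosed_iInter fun x => isClosed_iInter fun y => isClosed_le (by fun_prop) (by fun_prop)
  · exact isClosed_iInter fun x => isClosed_le (by fun_prop) (by fun_prop)

theorem fcap_bounded (S : Set A) (a : ι → A) (c : ι → ℝ) (hc : ∀ i, 0 < c i)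
    (ha : Submodule.span ℝ (Set.range a) = ⊤) (i0 : ι) (hi0 : a i0 = 1) (x : A) :
    ∃ M, ∀ l ∈ fcap S a c, |l x| ≤ M := by
  have hx : x ∈ Submodule.span ℝ (Set.range a) := by rw [ha]; trivial
  induction hx using Submodule.span_induction with
  | mem x hx =>
    obtain ⟨i, rfl⟩ := hx
    refine ⟨1 + (1 / c i0) * (1 / c i), fun l hl => ?_⟩
    obtain ⟨L, rfl⟩ := exists_lin_of_mem_fcap hl
    rw [mem_fcap] at hl
    have h1 : ∀ j, L (a j ^ 2) ≤ 1 / c j := by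
      intro j
      have := hl.2 {j}
      rw [Finset.sum_singleton] at this
      rw [le_div_iff₀ (hc j)]
      linarith
    have h2 := cauchy_schwarz L (fun a => hl.1 _ (.sq a)) 1 (a i)
    have h3 := h1 i0
    rw [hi0] at h3
    rw [one_mul] at h2
    have h4 : L (1 ^ 2) * L (a i ^ 2) ≤ (1 / c i0) * (1 / c i) :=
      mul_le_mul h3 (h1 i) (hl.1 _ (.sq _)) (by have := hc i0; positivity)
    have h5 : |L (a i)| ≤ 1 + L (a i) ^ 2 := by
      rw [← sq_abs]
      nlinarith [sq_nonneg (|L (a i)| - 1), abs_nonneg (L (a i))]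
    exact h5.trans (add_le_add le_rfl (h2.trans h4))
  | zero => exact ⟨0, fun l hl => by
      obtain ⟨L, rfl⟩ := exists_lin_of_mem_fcap hl
      simp⟩
  | add x y _ _ h1 h2 =>
    obtain ⟨M1, h1⟩ := h1
    obtain ⟨M2, h2⟩ := h2
    refine ⟨M1 + M2, fun l hl => ?_⟩
    rw [hl.1]
    exact (abs_add_le _ _).trans (add_le_add (h1 l hl) (h2 l hl))
  | smul r x _ h1 =>
    obtain ⟨M1, h1⟩ := h1
    refine ⟨|r| * M1, fun l hl => ?_⟩
    rw [hl.2.1, abs_mul]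
    exact mul_le_mul_of_nonneg_left (h1 l hl) (abs_nonneg r)

theorem fcap_compact (S : Set A) (a : ι → A) (c : ι → ℝ) (hc : ∀ i, 0 < c i)
    (ha : Submodule.span ℝ (Set.range a) = ⊤) (i0 : ι) (hi0 : a i0 = 1) :
    IsCompact (fcap S a c) := by
  choose M hM using fcap_bounded S a c hc ha i0 hi0
  refine (isCompact_univ_pi (fun x => isCompact_Icc (a := -M x) (b := M x))).of_isClosed_subset
    (fcap_closed S a c) ?_
  intro l hl x _
  exact abs_le.mp (hM x l hl)

theorem exists_extreme {E : Type*} [AddCommGroup E] [Module ℝ E] [TopologicalSpace E]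
    [T2Space E] [IsTopologicalAddGroup E] [ContinuousSMul ℝ E] [LocallyConvexSpace ℝ E]
    (s : Set E) (hs : IsCompact s) (x : E) (hx : x ∈ s) (φ : StrongDual ℝ E) :
    ∃ e ∈ s.extremePoints ℝ, φ e ≤ φ x := by
  have hexp : IsExposed ℝ s (ContinuousLinearMap.toExposed (-φ) s) :=
    ContinuousLinearMap.toExposed.isExposed
  have hcomp := hexp.isCompact hs
  obtain ⟨y, hy, hmin⟩ := hs.exists_isMinOn ⟨x, hx⟩ φ.continuous.continuousOn
  have hne : (ContinuousLinearMap.toExposed (-φ) s).Nonempty := by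
    refine ⟨y, hy, fun z hz => ?_⟩
    simpa using hmin hz
  obtain ⟨e, he⟩ := hcomp.extremePoints_nonempty hne
  refine ⟨e, hexp.isExtreme.extremePoints_subset_extremePoints he, ?_⟩
  have := he.1.2 x hx
  simpa using this

/-- the key property of extreme points of the cap -/
theorem extreme_mul (S : Set A) (a : ι → A) (c : ι → ℝ) (hc : ∀ i, 0 < c i)
    (i0 : ι) (hi0 : a i0 = 1) (L : A →ₗ[ℝ] ℝ) (hL : (L : A → ℝ) ∈ (fcap S a c).extremePoints ℝ)
    (b : A) (hb : ∀ t, IsInPreordering S t → |L (t * b)| ≤ L t) :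
    ∃ r : ℝ, ∀ x, L (b * x) = r * L x := by
  have hLm := (mem_fcap S a c L).mp hL.1
  let L1 : A →ₗ[ℝ] ℝ := (1 / 2 : ℝ) • L.comp (LinearMap.mulLeft ℝ (1 + b))
  let L2 : A →ₗ[ℝ] ℝ := (1 / 2 : ℝ) • L.comp (LinearMap.mulLeft ℝ (1 - b))
  have e1 : ∀ x, L1 x = (1 / 2) * (L x + L (b * x)) := by
    intro x
    simp [L1, add_mul]
  have e2 : ∀ x, L2 x = (1 / 2) * (L x - L (b * x)) := by
    intro x
    simp [L2, sub_mul]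
  have p1 : ∀ t, IsInPreordering S t → 0 ≤ L1 t := by
    intro t ht
    have := abs_le.mp (hb t ht)
    rw [e1, mul_comm b]; linarith
  have p2 : ∀ t, IsInPreordering S t → 0 ≤ L2 t := by
    intro t ht
    have := abs_le.mp (hb t ht)
    rw [e2, mul_comm b]; linarith
  have esum : ∀ x, L1 x + L2 x = L x := fun x => by rw [e1, e2]; ring
  have hsq1 : ∀ i, 0 ≤ c i * L1 (a i ^ 2) := fun i => mul_nonneg (hc i).le (p1 _ (.sq _))
  have hsq2 : ∀ i, 0 ≤ c i * L2 (a i ^ 2) := fun i => mul_nonneg (hc i).le (p2 _ (.sq _))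
  have hfin : ∀ s : Finset ι, ∑ i ∈ s, c i * L1 (a i ^ 2) + ∑ i ∈ s, c i * L2 (a i ^ 2) ≤ 1 := by
    intro s
    rw [← Finset.sum_add_distrib]
    refine le_trans (le_of_eq (Finset.sum_congr rfl fun i _ => ?_)) (hLm.2 s)
    rw [← esum]; ring
  have hs1 : Summable (fun i => c i * L1 (a i ^ 2)) :=
    summable_of_sum_le hsq1 (c := 1) fun s => by
      have := hfin s
      have := Finset.sum_nonneg (s := s) fun i _ => hsq2 i
      linarith
  have hs2 : Summable (fun i => c i * L2 (a i ^ 2)) :=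
    summable_of_sum_le hsq2 (c := 1) fun s => by
      have := hfin s
      have := Finset.sum_nonneg (s := s) fun i _ => hsq1 i
      linarith
  set w1 := ∑' i, c i * L1 (a i ^ 2) with hw1
  set w2 := ∑' i, c i * L2 (a i ^ 2) with hw2
  have hw : w1 + w2 ≤ 1 := by
    rw [hw1, hw2, ← hs1.tsum_add hs2]
    refine (hs1.add hs2).tsum_le_of_sum_le fun s => ?_
    rw [Finset.sum_add_distrib]
    exact hfin s
  have hz : ∀ (L' : A →ₗ[ℝ] ℝ), (∀ t, IsInPreordering S t → 0 ≤ L' t) →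
      Summable (fun i => c i * L' (a i ^ 2)) → ∑' i, c i * L' (a i ^ 2) ≤ 0 → ∀ x, L' x = 0 := by
    intro L' hL' hs h0 x
    have h1 := hs.le_tsum i0 (fun j _ => mul_nonneg (hc j).le (hL' _ (.sq _)))
    rw [hi0, one_pow] at h1
    have h2 : L' 1 ≤ 0 := by
      by_contra hcon
      push Not at hcon
      have := mul_pos (hc i0) hcon
      linarith
    have h3 : L' 1 = 0 := le_antisymm h2 (hL' _ (.one S))
    have h4 := cauchy_schwarz L' (fun a => hL' _ (.sq a)) 1 x
    rw [one_pow, h3, one_mul, zero_mul] at h4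
    exact pow_eq_zero_iff (two_ne_zero) |>.mp (le_antisymm h4 (sq_nonneg _))
  rcases le_or_gt w1 0 with h1 | h1
  · refine ⟨-1, fun x => ?_⟩
    have := hz L1 p1 hs1 h1 x
    rw [e1] at this
    linarith
  rcases le_or_gt w2 0 with h2 | h2
  · refine ⟨1, fun x => ?_⟩
    have := hz L2 p2 hs2 h2 x
    rw [e2] at this
    linarith
  have hβ : 0 < 1 - w1 := by linarith
  have m1 : ((w1⁻¹ • L1 : A →ₗ[ℝ] ℝ) : A → ℝ) ∈ fcap S a c := by
    rw [mem_fcap]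
    refine ⟨fun x hx => ?_, fun s => ?_⟩
    · have := p1 x hx
      simp only [LinearMap.smul_apply, smul_eq_mul]; positivity
    · have := hs1.sum_le_tsum s (fun i _ => hsq1 i)
      have e : ∑ i ∈ s, c i * (w1⁻¹ • L1) (a i ^ 2) = w1⁻¹ * ∑ i ∈ s, c i * L1 (a i ^ 2) := by
        rw [Finset.mul_sum]
        refine Finset.sum_congr rfl fun i _ => ?_
        simp only [LinearMap.smul_apply, smul_eq_mul]; ring
      rw [e, inv_mul_le_iff₀ h1]
      linarith
  have m2 : (((1 - w1)⁻¹ • L2 : A →ₗ[ℝ] ℝ) : A → ℝ) ∈ fcap S a c := by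
    rw [mem_fcap]
    refine ⟨fun x hx => ?_, fun s => ?_⟩
    · have := p2 x hx
      simp only [LinearMap.smul_apply, smul_eq_mul]; positivity
    · have := hs2.sum_le_tsum s (fun i _ => hsq2 i)
      have e : ∑ i ∈ s, c i * ((1 - w1)⁻¹ • L2) (a i ^ 2) =
          (1 - w1)⁻¹ * ∑ i ∈ s, c i * L2 (a i ^ 2) := by
        rw [Finset.mul_sum]
        refine Finset.sum_congr rfl fun i _ => ?_
        simp only [LinearMap.smul_apply, smul_eq_mul]; ring
      rw [e, inv_mul_le_iff₀ hβ]
      linarith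
  have hseg : (L : A → ℝ) ∈ openSegment ℝ ((w1⁻¹ • L1 : A →ₗ[ℝ] ℝ) : A → ℝ)
      (((1 - w1)⁻¹ • L2 : A →ₗ[ℝ] ℝ) : A → ℝ) := by
    refine ⟨w1, 1 - w1, h1, hβ, by ring, ?_⟩
    funext x
    simp only [Pi.add_apply, Pi.smul_apply, LinearMap.smul_apply, smul_eq_mul]
    rw [mul_inv_cancel_left₀ h1.ne', mul_inv_cancel_left₀ hβ.ne', esum]
  have heq := hL.2 m1 m2 hseg
  refine ⟨2 * w1 - 1, fun x => ?_⟩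
  have := congrFun heq x
  simp only [LinearMap.smul_apply, smul_eq_mul] at this
  rw [inv_mul_eq_iff_eq_mul₀ h1.ne', e1] at this
  linarith

theorem exists_spanning (hA : Algebra.FiniteType ℝ A) : ∃ (n : ℕ) (a : (Fin n →₀ ℕ) → A),
    Submodule.span ℝ (Set.range a) = ⊤ ∧ a 0 = 1 := by
  obtain ⟨n, f, hf⟩ := Algebra.FiniteType.iff_quotient_mvPolynomial''.mp hA
  refine ⟨n, fun s => f (MvPolynomial.monomial s 1), ?_, ?_⟩
  · have h1 : Set.range (fun s => f (MvPolynomial.monomial s (1 : ℝ))) =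
        f.toLinearMap '' Set.range (fun s : Fin n →₀ ℕ => MvPolynomial.monomial s (1 : ℝ)) := by
      rw [← Set.range_comp]; rfl
    rw [h1, Submodule.span_image]
    have h2 := (MvPolynomial.basisMonomials (Fin n) ℝ).span_eq
    rw [MvPolynomial.coe_basisMonomials] at h2
    rw [h2, Submodule.map_top]
    exact LinearMap.range_eq_top.mpr hf
  · change f 1 = 1
    exact map_one f

end caps

theorem pos_of_fibres {A : Type*} [CommRing A] [Algebra ℝ A]
    (hfg : Algebra.FiniteType ℝ A) {k m : ℕ} (f : Fin k → A) (h : Fin m → A)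
    (hbd : ∃ C : ℝ, ∀ χ ∈ KSet (Set.range f), ∀ j : Fin m, |χ (h j)| ≤ C)
    (hfib : ∀ lam : Fin m → ℝ,
        (∃ χ ∈ KSet (Set.range f), ∀ j : Fin m, χ (h j) = lam j) →
        HasMP (fibreGens f h lam))
    (L : A →ₗ[ℝ] ℝ) (hL : ∀ a, IsInPreordering (Set.range f) a → 0 ≤ L a)
    (p : A) (hp : ∀ χ : A →ₐ[ℝ] ℝ, 0 ≤ χ p) : 0 ≤ L p := by
  classical
  by_contra hneg
  push Not at hneg
  set S := Set.range f with hS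
  have hSf : S.Finite := Set.finite_range f
  obtain ⟨n, a, ha, ha0⟩ := exists_spanning hfg
  haveI : Encodable (Fin n →₀ ℕ) := Encodable.ofCountable _
  obtain ⟨ε, hε, w, hw, hw1⟩ := posSumOfEncodable (ε := 1) one_pos (Fin n →₀ ℕ)
  have hLsq : ∀ i, 0 ≤ L (a i ^ 2) := fun i => hL _ (.sq _)
  set c : (Fin n →₀ ℕ) → ℝ := fun i => ε i / (1 + L (a i ^ 2)) with hcdef
  have hc : ∀ i, 0 < c i := fun i => div_pos (hε i) (by have := hLsq i; linarith)
  have hLm : (L : A → ℝ) ∈ fcap S a c := by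
    rw [mem_fcap]
    refine ⟨hL, fun s => ?_⟩
    refine le_trans (Finset.sum_le_sum (g := ε) fun i _ => ?_)
      ((sum_le_hasSum s (fun i _ => (hε i).le) hw).trans hw1)
    have := hLsq i
    rw [hcdef]
    simp only
    rw [div_mul_eq_mul_div, div_le_iff₀ (by linarith)]
    have := hε i
    nlinarith
  obtain ⟨e, he, hep⟩ := exists_extreme (fcap S a c) (fcap_compact S a c hc ha 0 ha0) L hLm
    (ContinuousLinearMap.proj p)
  obtain ⟨E, rfl⟩ := exists_lin_of_mem_fcap he.1
  have hEm := (mem_fcap S a c E).mp he.1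
  have hEp : E p < 0 := lt_of_le_of_lt hep hneg
  obtain ⟨C, hC⟩ := hbd
  have hC1 : 0 < |C| + 1 := by positivity
  have hlam : ∀ j, ∃ r : ℝ, ∀ x, E (h j * x) = r * E x := by
    intro j
    obtain ⟨r, hr⟩ := extreme_mul S a c hc 0 ha0 E he ((|C| + 1)⁻¹ • h j)
      (bounded_mul hfg S hSf _ (fun χ hχ => by
        rw [map_smul, smul_eq_mul, abs_mul, abs_of_pos (inv_pos.mpr hC1), inv_mul_le_iff₀ hC1]
        have := hC χ hχ j
        have := le_abs_self C
        linarith) E hEm.1)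
    refine ⟨(|C| + 1) * r, fun x => ?_⟩
    have := hr x
    rw [smul_mul_assoc, map_smul, smul_eq_mul, inv_mul_eq_iff_eq_mul₀ hC1.ne'] at this
    rw [this]; ring
  choose lam hlam using hlam
  have hpos : ∀ x, IsInPreordering (fibreGens f h lam) x → 0 ≤ E x := by
    have key : ∀ x, IsInPreordering (fibreGens f h lam) x →
        ∃ t, IsInPreordering S t ∧ ∀ y, E (x * y) = E (t * y) := by
      intro x hx
      induction hx with
      | sq x => exact ⟨x ^ 2, .sq x, fun _ => rfl⟩
      | gen hs =>
        rcases hs with hs | hs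
        · exact ⟨_, .gen hs, fun _ => rfl⟩
        · obtain ⟨j, hj⟩ := Set.mem_iUnion.mp hs
          refine ⟨0, .zero S, fun y => ?_⟩
          have e0 : E (h j * y) = E (algebraMap ℝ A (lam j) * y) := by
            rw [hlam, ← Algebra.smul_def, map_smul, smul_eq_mul]
          rcases hj with rfl | rfl
          · rw [sub_mul, map_sub, e0]; simp
          · rw [sub_mul, map_sub, e0]; simp
      | add _ _ h1 h2 =>
        obtain ⟨t, ht, ht'⟩ := h1
        obtain ⟨s, hs, hs'⟩ := h2
        exact ⟨t + s, ht.add hs, fun y => by rw [add_mul, add_mul, map_add, map_add, ht', hs']⟩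
      | @mul x z _ _ h1 h2 =>
        obtain ⟨t, ht, ht'⟩ := h1
        obtain ⟨s, hs, hs'⟩ := h2
        exact ⟨t * s, ht.mul hs, fun y => by
          rw [mul_assoc, ht', mul_left_comm, hs', mul_left_comm, mul_assoc]⟩
    intro x hx
    obtain ⟨t, ht, ht'⟩ := key x hx
    have := ht' 1
    rw [mul_one, mul_one] at this
    rw [this]
    exact hEm.1 t ht
  have hfin : (fibreGens f h lam).Finite := by
    refine hSf.union (Set.finite_iUnion fun j => ?_)
    exact (Set.finite_singleton _).insert _
  obtain ⟨χ, hχ⟩ := pss hfg (fibreGens f h lam) hfin (by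
    intro hcon
    have h1 := hpos _ hcon
    have h2 := hpos _ (.one _)
    rw [map_neg] at h1
    have h3 : E 1 = 0 := by linarith
    have h4 := cauchy_schwarz E (fun a => hEm.1 _ (.sq a)) 1 p
    rw [one_pow, h3, one_mul, zero_mul] at h4
    have h5 : 0 < E p ^ 2 := by nlinarith
    linarith)
  have hmp := hfib lam ⟨χ, fun x hx => hχ x (hx.mono Set.subset_union_left), fun j => by
    have h1 := hχ (h j - algebraMap ℝ A (lam j))
      (.gen (Or.inr (Set.mem_iUnion.mpr ⟨j, Or.inl rfl⟩)))
    have h2 := hχ (algebraMap ℝ A (lam j) - h j)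
      (.gen (Or.inr (Set.mem_iUnion.mpr ⟨j, Or.inr rfl⟩)))
    rw [map_sub, AlgHom.commutes] at h1 h2
    simp at h1 h2
    linarith⟩ E hpos
  obtain ⟨μ, hμ⟩ := hmp
  rw [(hμ p).2] at hEp
  exact absurd (MeasureTheory.integral_nonneg hp) (not_le.mpr hEp)

end Part7

section Part8

open MeasureTheory Filter Topology
open scoped CompactlySupported

section haviland
variable {A : Type*} [CommRing A] [Algebra ℝ A]

theorem char_isClosedEmbedding :
    IsClosedEmbedding (fun (χ : A →ₐ[ℝ] ℝ) (a : A) => χ a) := by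
  refine ⟨⟨⟨rfl⟩, fun χ χ' h => AlgHom.ext fun a => congrFun h a⟩, ?_⟩
  have : Set.range (fun (χ : A →ₐ[ℝ] ℝ) (a : A) => χ a) =
      {l : A → ℝ | (∀ x y, l (x + y) = l x + l y) ∧ (∀ x y, l (x * y) = l x * l y) ∧
        ∀ r : ℝ, l (algebraMap ℝ A r) = r} := by
    ext l
    constructor
    · rintro ⟨χ, rfl⟩
      exact ⟨fun x y => map_add χ x y, fun x y => map_mul χ x y, fun r => by simp⟩
    · rintro ⟨h1, h2, h3⟩
      exact ⟨{ toFun := l, map_add' := h1, map_mul' := h2, commutes' := h3,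
               map_one' := by simpa using h3 1, map_zero' := by simpa using h3 0 }, rfl⟩
  rw [this]
  simp only [Set.setOf_and, Set.setOf_forall]
  refine IsClosed.inter ?_ (IsClosed.inter ?_ ?_)
  · exact isClosed_iInter fun x => isClosed_iInter fun y => isClosed_eq (by fun_prop) (by fun_prop)
  · exact isClosed_iInter fun x => isClosed_iInter fun y => isClosed_eq (by fun_prop) (by fun_prop)
  · exact isClosed_iInter fun x => isClosed_eq (by fun_prop) (by fun_prop)

theorem char_continuous (a : A) : Continuous (fun χ : A →ₐ[ℝ] ℝ => χ a) :=
  (continuous_apply a).comp char_isClosedEmbedding.continuous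

instance char_t2 : T2Space (A →ₐ[ℝ] ℝ) := char_isClosedEmbedding.toIsEmbedding.t2Space

instance char_borel : BorelSpace (A →ₐ[ℝ] ℝ) := ⟨rfl⟩

theorem char_bound (s : Finset A) (hs : Algebra.adjoin ℝ (s : Set A) = ⊤) (ρ : ℝ) (a : A) :
    ∃ M, ∀ χ : A →ₐ[ℝ] ℝ, χ (∑ x ∈ s, x ^ 2) ≤ ρ → |χ a| ≤ M := by
  have ha : a ∈ Algebra.adjoin ℝ (s : Set A) := by rw [hs]; trivial
  induction ha using Algebra.adjoin_induction with
  | mem x hx =>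
    refine ⟨1 + ρ, fun χ hχ => ?_⟩
    rw [map_sum] at hχ
    have h1 : χ (x ^ 2) ≤ ∑ y ∈ s, χ (y ^ 2) :=
      Finset.single_le_sum (f := fun y => χ (y ^ 2))
        (fun y _ => by rw [map_pow]; positivity) hx
    rw [map_pow, ← sq_abs] at h1
    nlinarith [sq_nonneg (|χ x| - 1), abs_nonneg (χ x)]
  | algebraMap r => exact ⟨|r|, fun χ _ => by simp⟩
  | add x y _ _ h1 h2 =>
    obtain ⟨M1, h1⟩ := h1
    obtain ⟨M2, h2⟩ := h2
    refine ⟨M1 + M2, fun χ hχ => ?_⟩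
    rw [map_add]
    exact (abs_add_le _ _).trans (add_le_add (h1 χ hχ) (h2 χ hχ))
  | mul x y _ _ h1 h2 =>
    obtain ⟨M1, h1⟩ := h1
    obtain ⟨M2, h2⟩ := h2
    refine ⟨M1 * M2, fun χ hχ => ?_⟩
    rw [map_mul, abs_mul]
    exact mul_le_mul (h1 χ hχ) (h2 χ hχ) (abs_nonneg _) ((abs_nonneg _).trans (h1 χ hχ))

theorem char_compact (s : Finset A) (hs : Algebra.adjoin ℝ (s : Set A) = ⊤) (ρ : ℝ) :
    IsCompact {χ : A →ₐ[ℝ] ℝ | χ (∑ x ∈ s, x ^ 2) ≤ ρ} := by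
  choose M hM using char_bound s hs ρ
  refine (char_isClosedEmbedding.isCompact_preimage
    (isCompact_univ_pi (fun x => isCompact_Icc (a := -M x) (b := M x)))).of_isClosed_subset
    (isClosed_le (char_continuous _) continuous_const) ?_
  intro χ hχ x _
  exact abs_le.mp (hM x χ hχ)

theorem char_locallyCompact (hA : Algebra.FiniteType ℝ A) : LocallyCompactSpace (A →ₐ[ℝ] ℝ) := by
  obtain ⟨s, hs⟩ := hA.out
  have : WeaklyLocallyCompactSpace (A →ₐ[ℝ] ℝ) := by
    refine ⟨fun χ => ⟨_, char_compact s hs (χ (∑ x ∈ s, x ^ 2) + 1), ?_⟩⟩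
    refine mem_of_superset ((isOpen_lt (char_continuous (∑ x ∈ s, x ^ 2))
      (continuous_const (y := χ (∑ x ∈ s, x ^ 2) + 1))).mem_nhds ?_) ?_
    · simp
    · intro y hy
      have hy2 : y (∑ x ∈ s, x ^ 2) < χ (∑ x ∈ s, x ^ 2) + 1 := hy
      exact hy2.le
  infer_instance

/-- existence of the extended functional -/
theorem exists_ext (L : A →ₗ[ℝ] ℝ) (hL : ∀ p : A, (∀ χ : A →ₐ[ℝ] ℝ, 0 ≤ χ p) → 0 ≤ L p) :
    ∃ Λ : C_c(A →ₐ[ℝ] ℝ, ℝ) →ₗ[ℝ] ℝ, ∀ (a : A) (φ : C_c(A →ₐ[ℝ] ℝ, ℝ)),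
      (∀ χ, 0 ≤ χ a + φ χ) → 0 ≤ L a + Λ φ := by
  let s : PointedCone ℝ (A × C_c(A →ₐ[ℝ] ℝ, ℝ)) :=
    { carrier := {z | ∀ χ, 0 ≤ χ z.1 + z.2 χ}
      add_mem' := by
        intro z w hz hw χ
        have h1 := hz χ
        have h2 := hw χ
        simp only [Prod.fst_add, Prod.snd_add, map_add, CompactlySupportedContinuousMap.coe_add,
          Pi.add_apply]
        linarith
      zero_mem' := by
        intro χ
        simp
      smul_mem' := by
        intro c z hz χ
        have h1 := mul_nonneg c.2 (hz χ)
        rw [mul_add] at h1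
        change 0 ≤ χ ((c : ℝ) • z.1) + (c : ℝ) * z.2 χ
        rw [map_smul, smul_eq_mul]
        exact h1 }
  let f : (A × C_c(A →ₐ[ℝ] ℝ, ℝ)) →ₗ.[ℝ] ℝ :=
    { domain := Submodule.prod ⊤ ⊥
      toFun := (L.comp (LinearMap.fst ℝ A C_c(A →ₐ[ℝ] ℝ, ℝ))).comp (Submodule.subtype _) }
  have hf : ∀ x : f.domain, f x = L x.1.1 := fun x => rfl
  have hdom : ∀ a : A, ((a, 0) : A × C_c(A →ₐ[ℝ] ℝ, ℝ)) ∈ f.domain := by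
    intro a
    exact ⟨trivial, rfl⟩
  have hs : ∀ z, z ∈ s ↔ ∀ χ, 0 ≤ χ z.1 + z.2 χ := fun z => Iff.rfl
  obtain ⟨g, hg1, hg2⟩ := riesz_extension s f (by
    intro x hx
    rw [hf]
    apply hL
    intro χ
    have h1 := hx χ
    have h2 : x.1.2 = 0 := x.2.2
    rw [h2] at h1
    simpa using h1) (by
    intro y
    obtain ⟨M, hM⟩ := y.2.hasCompactSupport.exists_bound_of_continuous y.2.continuous
    refine ⟨⟨(algebraMap ℝ A M - y.1, 0), hdom _⟩, ?_⟩
    rw [hs]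
    intro χ
    have := abs_le.mp (hM χ)
    simp only [Prod.fst_add, Prod.snd_add, sub_add_cancel, AlgHom.commutes, zero_add]
    simp
    linarith)
  refine ⟨g.comp (LinearMap.inr ℝ A C_c(A →ₐ[ℝ] ℝ, ℝ)), fun a φ h => ?_⟩
  have h1 := hg2 (a, φ) h
  have h2 : g (a, φ) = g (a, 0) + g (0, φ) := by rw [← map_add]; simp
  rw [h2, hg1 ⟨(a, 0), hdom a⟩, hf] at h1
  exact h1

theorem haviland (hA : Algebra.FiniteType ℝ A) (L : A →ₗ[ℝ] ℝ)
    (hL : ∀ p : A, (∀ χ : A →ₐ[ℝ] ℝ, 0 ≤ χ p) → 0 ≤ L p) : IsMomentFunctional L := by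
  have := char_locallyCompact hA
  obtain ⟨s, hs⟩ := hA.out
  set q : A := ∑ x ∈ s, x ^ 2 with hq
  have hq0 : ∀ χ : A →ₐ[ℝ] ℝ, 0 ≤ χ q := by
    intro χ
    rw [hq, map_sum]
    exact Finset.sum_nonneg fun x _ => by rw [map_pow]; positivity
  obtain ⟨Λ, hΛ⟩ := exists_ext L hL
  let Λp : C_c(A →ₐ[ℝ] ℝ, ℝ) →ₚ[ℝ] ℝ := PositiveLinearMap.mk₀ Λ (fun φ hφ => by
    have := hΛ 0 φ (fun χ => by simpa using hφ χ)
    simpa using this)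
  set μ : Measure (A →ₐ[ℝ] ℝ) := RealRMK.rieszMeasure Λp with hμ
  have hintegral : ∀ φ : C_c(A →ₐ[ℝ] ℝ, ℝ), ∫ χ, φ χ ∂μ = Λ φ := fun φ =>
    RealRMK.integral_rieszMeasure Λp φ
  let η : ℕ → (A →ₐ[ℝ] ℝ) → ℝ := fun n χ => max 0 (min 1 ((n : ℝ) + 2 - χ q))
  have hη0 : ∀ n χ, 0 ≤ η n χ := fun n χ => le_max_left _ _
  have hη1 : ∀ n χ, η n χ ≤ 1 := fun n χ => max_le zero_le_one (min_le_left _ _)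
  have hηm : ∀ χ, Monotone (fun n => η n χ) := by
    intro χ n m hnm
    have : (n : ℝ) ≤ m := by exact_mod_cast hnm
    exact max_le_max le_rfl (min_le_min le_rfl (by linarith))
  have hηe : ∀ (n : ℕ) χ, χ q ≤ (n : ℝ) + 1 → η n χ = 1 := by
    intro n χ h
    simp only [η]
    rw [min_eq_left (by linarith), max_eq_right zero_le_one]
  have hηc : ∀ n, Continuous (η n) := fun n =>
    continuous_const.max (continuous_const.min (continuous_const.sub (char_continuous q)))
  have hηt : ∀ χ, Tendsto (fun n => η n χ) atTop (𝓝 1) := by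
    intro χ
    obtain ⟨N, hN⟩ := exists_nat_ge (χ q)
    refine tendsto_const_nhds.congr' ?_
    filter_upwards [eventually_ge_atTop N] with n hn
    have : (N : ℝ) ≤ n := by exact_mod_cast hn
    exact (hηe n χ (by linarith)).symm
  let Φ : A → ℕ → C_c(A →ₐ[ℝ] ℝ, ℝ) := fun a n =>
    ⟨⟨fun χ => χ a * η n χ, (char_continuous a).mul (hηc n)⟩,
      HasCompactSupport.intro (char_compact s hs ((n : ℝ) + 2)) (by
        intro χ hχ
        have h1 : (n : ℝ) + 2 < χ q := not_le.mp hχ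
        have : η n χ = 0 := max_eq_left ((min_le_right _ _).trans (by linarith))
        change χ a * η n χ = 0
        rw [this, mul_zero])⟩
  have hΦ : ∀ a n χ, Φ a n χ = χ a * η n χ := fun a n χ => rfl
  have hpos : ∀ a : A, (∀ χ : A →ₐ[ℝ] ℝ, 0 ≤ χ a) →
      Integrable (fun χ : A →ₐ[ℝ] ℝ => χ a) μ ∧ L a = ∫ χ : A →ₐ[ℝ] ℝ, χ a ∂μ := by
    intro a ha
    have hup : ∀ n, Λ (Φ a n) ≤ L a := by
      intro n
      have := hΛ a (-Φ a n) (fun χ => by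
        rw [CompactlySupportedContinuousMap.coe_neg, Pi.neg_apply, hΦ]
        nlinarith [ha χ, hη1 n χ])
      rw [map_neg] at this
      linarith
    have hlow : ∀ n : ℕ, L a - L (q * a) * (1 / ((n : ℝ) + 1)) ≤ Λ (Φ a n) := by
      intro n
      have hn : (0 : ℝ) < (n : ℝ) + 1 := by positivity
      have := hΛ ((1 / ((n : ℝ) + 1)) • (q * a) - a) (Φ a n) (fun χ => by
        rw [map_sub, map_smul, map_mul, smul_eq_mul, hΦ]
        rcases le_or_gt (χ q) ((n : ℝ) + 1) with h | h
        · rw [hηe n χ h]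
          have := mul_nonneg (one_div_pos.mpr hn).le (mul_nonneg (hq0 χ) (ha χ))
          linarith
        · have h1 : 1 ≤ 1 / ((n : ℝ) + 1) * χ q := by
            rw [one_div_mul_eq_div, le_div_iff₀ hn]; linarith
          have h2 := mul_nonneg (sub_nonneg.mpr h1) (ha χ)
          have h3 := mul_nonneg (ha χ) (hη0 n χ)
          linarith)
      rw [map_sub, map_smul, smul_eq_mul] at this
      linarith
    have hΦi : ∀ n, Integrable (fun χ => χ a * η n χ) μ := fun n =>
      (Φ a n).continuous.integrable_of_hasCompactSupport (Φ a n).hasCompactSupport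
    have hlin : ∀ n, ∫⁻ χ, ENNReal.ofReal (χ a * η n χ) ∂μ ≤ ENNReal.ofReal (L a) := by
      intro n
      rw [← ofReal_integral_eq_lintegral_ofReal (hΦi n)
        (Eventually.of_forall fun χ => mul_nonneg (ha χ) (hη0 n χ))]
      refine ENNReal.ofReal_le_ofReal ?_
      have := hintegral (Φ a n)
      simp only [hΦ] at this
      rw [this]
      exact hup n
    have hmul : ∀ χ : A →ₐ[ℝ] ℝ, Tendsto (fun n => χ a * η n χ) atTop (𝓝 (χ a)) := by
      intro χ
      simpa using (hηt χ).const_mul (χ a)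
    have hlim : Tendsto (fun n => ∫⁻ χ, ENNReal.ofReal (χ a * η n χ) ∂μ) atTop
        (𝓝 (∫⁻ χ, ENNReal.ofReal (χ a) ∂μ)) := by
      refine lintegral_tendsto_of_tendsto_of_monotone (fun n => ?_)
        (Eventually.of_forall fun χ n m hnm => ?_) (Eventually.of_forall fun χ => ?_)
      · exact ((Φ a n).continuous.measurable.ennreal_ofReal).aemeasurable
      · exact ENNReal.ofReal_le_ofReal (mul_le_mul_of_nonneg_left (hηm χ hnm) (ha χ))
      · exact (ENNReal.continuous_ofReal.tendsto _).comp (hmul χ)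
    have hfin : ∫⁻ χ : A →ₐ[ℝ] ℝ, ENNReal.ofReal (χ a) ∂μ ≤ ENNReal.ofReal (L a) :=
      le_of_tendsto' hlim hlin
    have hmeas : AEStronglyMeasurable (fun χ : A →ₐ[ℝ] ℝ => χ a) μ :=
      (char_continuous a).measurable.aestronglyMeasurable
    have hI : Integrable (fun χ : A →ₐ[ℝ] ℝ => χ a) μ := by
      refine ⟨hmeas, ?_⟩
      rw [hasFiniteIntegral_iff_ofReal (Eventually.of_forall ha)]
      exact hfin.trans_lt ENNReal.ofReal_lt_top
    refine ⟨hI, ?_⟩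
    have hconv : Tendsto (fun n => Λ (Φ a n)) atTop (𝓝 (∫ χ : A →ₐ[ℝ] ℝ, χ a ∂μ)) := by
      have := tendsto_integral_of_dominated_convergence (fun χ : A →ₐ[ℝ] ℝ => χ a)
        (F := fun n χ => χ a * η n χ) (fun n => (hΦi n).aestronglyMeasurable) hI
        (fun n => Eventually.of_forall fun χ => by
          rw [Real.norm_eq_abs, abs_of_nonneg (mul_nonneg (ha χ) (hη0 n χ))]
          nlinarith [ha χ, hη1 n χ]) (Eventually.of_forall hmul)
      refine this.congr fun n => ?_
      exact hintegral (Φ a n)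
    apply le_antisymm
    · have h1 : Tendsto (fun n : ℕ => L a - L (q * a) * (1 / ((n : ℝ) + 1))) atTop (𝓝 (L a)) := by
        simpa using (tendsto_one_div_add_atTop_nhds_zero_nat.const_mul (L (q * a))).const_sub (L a)
      exact le_of_tendsto_of_tendsto' h1 hconv hlow
    · exact le_of_tendsto' hconv hup
  refine ⟨μ, fun a => ?_⟩
  obtain ⟨i1, j1⟩ := hpos (((1 / 2 : ℝ) • (a + 1)) ^ 2) (fun χ => by rw [map_pow]; positivity)
  obtain ⟨i2, j2⟩ := hpos (((1 / 2 : ℝ) • (a - 1)) ^ 2) (fun χ => by rw [map_pow]; positivity)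
  have e : a = ((1 / 2 : ℝ) • (a + 1)) ^ 2 - ((1 / 2 : ℝ) • (a - 1)) ^ 2 := by
    rw [smul_pow, smul_pow, ← smul_sub, show (a + 1) ^ 2 - (a - 1) ^ 2 = (4 : ℝ) • a by
      rw [Algebra.smul_def, map_ofNat]; ring, smul_smul]
    norm_num
  have e' : ∀ χ : A →ₐ[ℝ] ℝ, χ a = χ (((1 / 2 : ℝ) • (a + 1)) ^ 2) -
      χ (((1 / 2 : ℝ) • (a - 1)) ^ 2) := by
    intro χ
    rw [← map_sub, ← e]
  constructor
  · simp_rw [e']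
    exact i1.sub i2
  · have : L a = L (((1 / 2 : ℝ) • (a + 1)) ^ 2) - L (((1 / 2 : ℝ) • (a - 1)) ^ 2) := by
      rw [← map_sub, ← e]
    rw [this, j1, j2, ← integral_sub i1 i2]
    exact integral_congr_ae (Eventually.of_forall fun χ => (e' χ).symm)

end haviland

theorem fibre_theorem_MP {A : Type*} [CommRing A] [Algebra ℝ A]
    (hfg : Algebra.FiniteType ℝ A) {k m : ℕ} (f : Fin k → A) (h : Fin m → A)
    (hbd : ∃ C : ℝ, ∀ χ ∈ KSet (Set.range f), ∀ j : Fin m, |χ (h j)| ≤ C) :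
    HasMP (Set.range f) ↔
      ∀ lam : Fin m → ℝ,
        (∃ χ ∈ KSet (Set.range f), ∀ j : Fin m, χ (h j) = lam j) →
        HasMP (fibreGens f h lam) := by
  constructor
  · intro hmp lam _ L hL
    exact hmp L fun a ha => hL a (ha.mono Set.subset_union_left)
  · intro hfib L hL
    exact haviland hfg L (fun p hp => pos_of_fibres hfg f h hbd hfib L hL p hp)

end Part8
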